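/- arXiv:1108.1247 — 2 statements merged into one kernel-verified Lean document; each statement's English description precedes it below -/
import Mathlib

section
/- Let k and t be positive integers with k ≥ 3. There exists n₀ = n₀(k,t) such that for all integers n ≥ n₀, the maximum number of edges in a k-uniform hypergraph on n vertices containing no k-uniform loose path of length 2t+1 equals C(n−1,k−1) + C(n−2,k−1) + … + C(n−t,k−1); moreover, a family F ⊆ binom([n],k) with no loose path of length 2t+1 attains this maximum size if and only if there exists a set S ⊆ [n] with |S| = t such that F consists of exactly all k-subsets of [n] that intersect S. -/
open Finset

/-- The family `F` of k-sets contains a k-uniform loose path of length ℓ: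
distinct members `P 0, …, P (ℓ-1)` where `P i` and `P j` (i < j) intersect
iff j = i + 1. -/
def ContainsLoosePath (k ℓ : ℕ) {n : ℕ} (F : Finset (Finset (Fin n))) : Prop :=
  ∃ P : Fin ℓ → Finset (Fin n), Function.Injective P ∧
    (∀ i, P i ∈ F) ∧ (∀ i, (P i).card = k) ∧
    (∀ i j : Fin ℓ, i < j → ((P i ∩ P j).Nonempty ↔ (i : ℕ) + 1 = (j : ℕ)))

/-!
Let `F` be a `k`-uniform family without a loose path of length `2t + 1` that is at least as large as
the family of `k`-sets meeting a fixed `t`-set.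

Following Füredi, Jiang and Seiver, a nonempty subfamily in which every `(k-1)`-subset of an edge
has many extensions contains long loose paths. Peeling off edges therefore gives each `(k-1)`-set
`T` a bounded list `L T` of extensions such that `#F ≤ ∑ #(L T)`. Call a vertex popular if it lies
on a positive proportion of the lists; boundedly many are. If many lists contained an unpopular
vertex, colouring each such `T` by one would give a colouring without large classes, along which a
loose path can be built greedily. Hence almost all lists lie in a bounded set `X`.

If `S` is contained in the extensions of many `(k-1)`-sets `T`, then disjoint such `T`s and the
vertices of `S` form a zigzag path of length `2 * #S`. So few lists inside `X` have more than `t`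
elements, the size of `F` forces most of them to have exactly `t`, and by pigeonhole some `t`-set
`S` is a common list of a positive proportion of all `(k-1)`-sets.

An edge missing `S` cannot meet a `(k-1)`-set that a vertex of `S` completes to an edge, since it
would extend a zigzag to length `2t + 1`. So every `(k-1)`-set outside `S` meeting the union `U` of
the edges missing `S` costs `F` all `t` edges through it and `S`. To compensate, the edges missing
`S` must be so numerous that a positive proportion of the lists built from them alone have more than
`t` elements, contradicting the previous paragraph. Hence every edge of `F` meets `S`.
-/

open scoped FinsetFamily

universe u

section LoosePath

variable {α : Type*} {P : ℕ → Finset α} {F G : Finset (Finset α)} {A : Finset α} {ℓ k : ℕ}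

/-- The sets `P 0, …, P (ℓ - 1)` form a loose path. Indexing by `ℕ` with irrelevant values from `ℓ`
on makes extending a path painless; neither the size nor the distinctness of the sets is imposed. -/
def IsLoosePath (P : ℕ → Finset α) (ℓ : ℕ) : Prop :=
  ∀ ⦃i j⦄, i < j → j < ℓ → (¬Disjoint (P i) (P j) ↔ i + 1 = j)

/-- Some members of `F` form a loose path of length `ℓ`. For uniform families and `3 ≤ ℓ` this is
`ContainsLoosePath`, see `containsLoosePath_iff_hasLoosePath`. -/
def HasLoosePath (F : Finset (Finset α)) (ℓ : ℕ) : Prop :=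
  ∃ P : ℕ → Finset α, IsLoosePath P ℓ ∧ ∀ i < ℓ, P i ∈ F

theorem HasLoosePath.mono (hFG : F ⊆ G) : HasLoosePath F ℓ → HasLoosePath G ℓ := by
  rintro ⟨P, hP, hPF⟩
  exact ⟨P, hP, fun i hi => hFG (hPF i hi)⟩

theorem IsLoosePath.injOn (hP : IsLoosePath P ℓ) (hℓ : 3 ≤ ℓ) : Set.InjOn P (Set.Iio ℓ) := by
  intro i hi j hj heq
  simp only [Set.mem_Iio] at hi hj
  by_contra hne
  wlog hij : i < j generalizing i j
  · exact this heq.symm hj hi (fun h => hne h.symm) (by omega)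
  by_cases hlast : j + 1 < ℓ
  · have hmeet : ¬Disjoint (P j) (P (j + 1)) := (hP j.lt_succ_self hlast).2 rfl
    rw [← heq] at hmeet
    have := (hP (by omega) hlast).1 hmeet
    omega
  · have hmeet : ¬Disjoint (P (j - 1)) (P j) := (hP (by omega) hj).2 (by omega)
    have hself : ¬Disjoint (P i) (P j) := by
      rw [heq, disjoint_self]
      exact fun hempty => hmeet (by rw [hempty]; exact disjoint_bot_right)
    have hsucc : i + 1 = j := (hP hij hj).1 hself
    have hmeet' : ¬Disjoint (P (i - 1)) (P i) := (hP (by omega) hi).2 (by omega)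
    rw [heq] at hmeet'
    have := (hP (by omega) hj).1 hmeet'
    omega

theorem IsLoosePath.cons (hP : IsLoosePath P ℓ) (hA : ∀ j < ℓ, (¬Disjoint A (P j) ↔ j = 0)) :
    IsLoosePath (fun | 0 => A | m + 1 => P m) (ℓ + 1) := by
  rintro (_ | i) (_ | j) hij hj
  · omega
  · simpa [eq_comm] using hA j (by omega)
  · omega
  · simpa using hP (by omega : i < j) (by omega)

theorem IsLoosePath.snoc (hP : IsLoosePath P ℓ)
    (hA : ∀ i < ℓ, (¬Disjoint (P i) A ↔ i + 1 = ℓ)) :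
    IsLoosePath (Function.update P ℓ A) (ℓ + 1) := by
  intro i j hij hj
  rw [Function.update_of_ne (by omega : i ≠ ℓ)]
  obtain rfl | hjℓ : j = ℓ ∨ j < ℓ := by omega
  · simpa using hA i hij
  · rw [Function.update_of_ne hjℓ.ne]
    exact hP hij hjℓ

theorem containsLoosePath_iff_hasLoosePath {n : ℕ} {F : Finset (Finset (Fin n))}
    (hF : (F : Set (Finset (Fin n))).Sized k) (hℓ : 3 ≤ ℓ) :
    ContainsLoosePath k ℓ F ↔ HasLoosePath F ℓ := by
  constructor
  · rintro ⟨P, -, hPF, -, hP⟩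
    refine ⟨fun i => if hi : i < ℓ then P ⟨i, hi⟩ else ∅, fun i j hij hj => ?_, fun i hi => ?_⟩
    · simpa [hj, hij.trans hj, not_disjoint_iff_nonempty_inter]
        using hP ⟨i, hij.trans hj⟩ ⟨j, hj⟩ hij
    · simpa [hi] using hPF ⟨i, hi⟩
  · rintro ⟨P, hP, hPF⟩
    refine ⟨fun i => P i, fun i j hij => Fin.ext (hP.injOn hℓ i.2 j.2 hij), fun i => hPF i i.2,
      fun i => hF (hPF i i.2), fun i j hij => ?_⟩
    rw [← not_disjoint_iff_nonempty_inter]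
    exact hP hij j.2

/-- Among more than `2 * #S` edges meeting `S`, three share a vertex of `S`; in a loose path no
three edges share a vertex. -/
theorem not_hasLoosePath_of_forall_not_disjoint {S : Finset α} (hF : ∀ A ∈ F, ¬Disjoint A S)
    (hℓ : 2 * #S < ℓ) : ¬HasLoosePath F ℓ := by
  classical
  rintro ⟨P, hP, hPF⟩
  have hmeet : ∀ i : Fin ℓ, ∃ s ∈ P i, s ∈ S := fun i => not_disjoint_iff.1 (hF _ (hPF i i.2))
  choose s hsP hsS using hmeet
  obtain ⟨y, -, hy⟩ := exists_lt_card_fiber_of_mul_lt_card_of_maps_to (s := univ) (n := 2)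
    (fun i _ => hsS i) (by simpa [mul_comm] using hℓ)
  obtain ⟨i, hi, j, hj, l, hl, hij, hil, hjl⟩ := two_lt_card.1 hy
  have adjacent_of_eq : ∀ i j : Fin ℓ, s i = y → s j = y → i ≠ j →
      (i : ℕ) + 1 = j ∨ (j : ℕ) + 1 = i := by
    intro i j hi hj hij
    have hshare : ¬Disjoint (P i) (P j) :=
      not_disjoint_iff.2 ⟨y, hi ▸ hsP i, hj ▸ hsP j⟩
    rcases lt_or_gt_of_ne hij with h | h
    · exact .inl ((hP h j.2).1 hshare)
    · exact .inr ((hP h i.2).1 (by rwa [disjoint_comm]))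
  simp only [mem_filter, mem_univ, true_and] at hi hj hl
  have := adjacent_of_eq i j hi hj hij
  have := adjacent_of_eq i l hi hl hil
  have := adjacent_of_eq j l hj hl hjl
  omega

/-- `Good W v` says that a path whose last edge contains `v` and whose earlier edges cover `W` can
be continued through `v`; in `step`, `W` is `W'` together with the last edge. -/
theorem hasLoosePath_of_greedy (hF : (F : Set (Finset α)).Sized k) (Good : Finset α → α → Prop)
    (start : ∃ A ∈ F, ∃ v ∈ A, Good ∅ v)
    (step : ∀ W' W v, W' ⊆ W → #W ≤ ℓ * k → Good W' v →
      ∃ A ∈ F, v ∈ A ∧ Disjoint A W' ∧ ∃ v' ∈ A, Good W v') :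
    HasLoosePath F ℓ := by
  classical
  suffices partial_path : ∀ i < ℓ, ∃ P : ℕ → Finset α, IsLoosePath P (i + 1) ∧
      (∀ j < i + 1, P j ∈ F) ∧ ∃ v ∈ P i, Good ((range i).biUnion P) v by
    rcases ℓ with _ | ℓ
    · exact ⟨fun _ => ∅, fun i j _ hj => by omega, fun i hi => by omega⟩
    · obtain ⟨P, hP, hPF, -⟩ := partial_path ℓ ℓ.lt_succ_self
      exact ⟨P, hP, hPF⟩
  intro i hi
  induction i with
  | zero =>
    obtain ⟨A, hA, v, hv, hgood⟩ := start
    exact ⟨fun _ => A, fun i j _ hj => by omega, fun _ _ => hA, v, hv, by simpa using hgood⟩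
  | succ i ih =>
    obtain ⟨P, hP, hPF, v, hv, hgood⟩ := ih (by omega)
    have hcard : #((range (i + 1)).biUnion P) ≤ ℓ * k := calc
      _ ≤ #(range (i + 1)) * k :=
        card_biUnion_le_card_mul _ _ _ fun j hj => (hF (hPF j (mem_range.1 hj))).le
      _ ≤ ℓ * k := by rw [card_range]; gcongr
    obtain ⟨A, hA, hvA, hdisj, v', hv', hgood'⟩ := step _ _ v
      (biUnion_subset_biUnion_of_subset_left P (range_subset_range.2 i.le_succ)) hcard hgood
    refine ⟨Function.update P (i + 1) A, hP.snoc fun j hj => ?_, fun j hj => ?_, v', by simpa, ?_⟩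
    · obtain rfl | hji : j = i ∨ j < i := by omega
      · simpa using not_disjoint_iff.2 ⟨v, hv, hvA⟩
      · have := (disjoint_biUnion_right _ _ _).1 hdisj j (mem_range.2 hji)
        simpa [hji.ne] using this.symm
    · obtain rfl | hji : j = i + 1 ∨ j < i + 1 := by omega
      · simpa using hA
      · simpa [hji.ne] using hPF j hji
    · convert hgood' using 1
      refine biUnion_congr rfl fun j hj => Function.update_of_ne (mem_range.1 hj).ne _ _

end LoosePath

section Full

variable {α : Type*} [Fintype α] [DecidableEq α] {F G : Finset (Finset α)} {T W : Finset α}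
  {q k ℓ a : ℕ} {x : α}

/-- The vertices completing `T` to an edge of `F`. -/
def extensions (F : Finset (Finset α)) (T : Finset α) : Finset α :=
  {x | x ∉ T ∧ insert x T ∈ F}

@[simp]
theorem mem_extensions : x ∈ extensions F T ↔ x ∉ T ∧ insert x T ∈ F := by
  simp [extensions]

theorem extensions_mono (hFG : F ⊆ G) (T : Finset α) : extensions F T ⊆ extensions G T := by
  intro x
  simp only [mem_extensions]
  exact fun hx => ⟨hx.1, hFG hx.2⟩

/-- Every set obtained by deleting a vertex from an edge of `F` has more than `q` extensions. -/
def IsFull (q : ℕ) (F : Finset (Finset α)) : Prop :=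
  ∀ A ∈ F, ∀ y ∈ A, q < #(extensions F (A.erase y))

theorem IsFull.exists_disjoint_erase (hfull : IsFull q F) (hW : #W ≤ q) {A : Finset α} (hA : A ∈ F)
    {v : α} (hv : v ∈ A) : ∃ A' ∈ F, v ∈ A' ∧ Disjoint (A'.erase v) W := by
  obtain ⟨A', hA', hmin⟩ := exists_min_image {B ∈ F | v ∈ B} (fun B => #(B.erase v ∩ W))
    ⟨A, by simp [hA, hv]⟩
  simp only [mem_filter] at hA' hmin
  refine ⟨A', hA'.1, hA'.2, ?_⟩
  by_contra hmeet
  obtain ⟨y, hy, hyW⟩ := not_disjoint_iff.1 hmeet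
  obtain ⟨hyv, hyA'⟩ := mem_erase.1 hy
  obtain ⟨x, hx, hxW⟩ := exists_mem_notMem_of_card_lt_card (hW.trans_lt (hfull A' hA'.1 y hyA'))
  have hxF : insert x (A'.erase y) ∈ F := (mem_extensions.1 hx).2
  have hlt : #((insert x (A'.erase y)).erase v ∩ W) < #(A'.erase v ∩ W) := by
    refine card_lt_card ((ssubset_iff_of_subset fun z => ?_).2 ⟨y, ?_, ?_⟩)
    · simp only [mem_inter, mem_erase, mem_insert]
      grind
    · simp [hyv, hyA', hyW]
    · simp [ne_of_mem_of_not_mem hyW hxW]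
  exact hlt.not_ge (hmin _ ⟨hxF, by simp [hA'.2, hyv.symm]⟩)

theorem IsFull.hasLoosePath (hF : (F : Set (Finset α)).Sized k) (hk : 2 ≤ k) (hne : F.Nonempty)
    (hfull : IsFull (ℓ * k) F) : HasLoosePath F ℓ := by
  refine hasLoosePath_of_greedy hF (fun W v => v ∉ W ∧ ∃ A ∈ F, v ∈ A) ?_ ?_
  · obtain ⟨A, hA⟩ := hne
    obtain ⟨v, hv⟩ : A.Nonempty := by rw [← card_pos, hF hA]; omega
    exact ⟨A, hA, v, hv, notMem_empty v, A, hA, hv⟩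
  · rintro W' W v hW'W hW ⟨hv, A, hA, hvA⟩
    obtain ⟨A', hA', hvA', hdisj⟩ := hfull.exists_disjoint_erase hW hA hvA
    obtain ⟨v', hv', hne⟩ := exists_mem_ne (by rw [hF hA']; omega : 1 < #A') v
    refine ⟨A', hA', hvA', ?_, v', hv', ?_, A', hA', hv'⟩
    · rw [← insert_erase hvA', disjoint_insert_left]
      exact ⟨hv, hdisj.mono_right hW'W⟩
    · exact disjoint_left.1 hdisj (mem_erase.2 ⟨hne, hv'⟩)

/-- `L` chooses at most `q` extensions of every set, so that the pairs `(T, x)` with `x ∈ L T` are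
edges of `F` with a marked vertex. -/
structure IsSelection (F : Finset (Finset α)) (q : ℕ) (L : Finset α → Finset α) : Prop where
  subset_extensions : ∀ T, L T ⊆ extensions F T
  card_le : ∀ T, #(L T) ≤ q

theorem card_le_card_filter_not_subset_add_card_extensions
    (hF : (F : Set (Finset α)).Sized (#T + 1)) :
    #F ≤ #{A ∈ F | ¬T ⊆ A} + #(extensions F T) := by
  have hsub : {A ∈ F | T ⊆ A} ⊆ (extensions F T).image (insert · T) := by
    intro A hA
    obtain ⟨hAF, hTA⟩ := mem_filter.1 hA
    obtain ⟨x, hx, rfl⟩ := (exists_eq_insert_iff (s := T) (t := A)).2 ⟨hTA, (hF hAF).symm⟩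
    exact mem_image.2 ⟨x, mem_extensions.2 ⟨hx, hAF⟩, rfl⟩
  have := (card_le_card hsub).trans card_image_le
  have := card_filter_add_card_filter_not (s := F) (T ⊆ ·)
  omega

theorem exists_isSelection_of_forall_not_isFull (hF : (F : Set (Finset α)).Sized (a + 1))
    (hnot : ∀ G ⊆ F, G.Nonempty → ¬IsFull q G) :
    ∃ L, IsSelection F q L ∧ #F ≤ ∑ T ∈ ∂ F, #(L T) := by
  induction F using Finset.strongInduction with
  | H F ih =>
  obtain rfl | hne := F.eq_empty_or_nonempty
  · exact ⟨fun _ => ∅, ⟨by simp, by simp⟩, by simp⟩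
  have hnotF := hnot F Subset.rfl hne
  simp only [IsFull, not_forall, not_lt] at hnotF
  obtain ⟨A, hA, y, hy, hfew⟩ := hnotF
  set T := A.erase y with hT
  have hTcard : #T = a := by rw [hT, card_erase_of_mem hy, hF hA, Nat.add_sub_cancel]
  have hssub : {B ∈ F | ¬T ⊆ B} ⊂ F := filter_ssubset.2 ⟨A, hA, not_not.2 (erase_subset y A)⟩
  obtain ⟨L, hL, hcard⟩ := ih _ hssub (hF.mono (coe_subset.2 hssub.subset))
    fun G hG => hnot G (hG.trans hssub.subset)
  have hLT : L T = ∅ := by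
    rw [← subset_empty]
    intro x hx
    have := mem_extensions.1 (hL.subset_extensions T hx)
    simp at this
  refine ⟨Function.update L T (extensions F T), ⟨fun T' => ?_, fun T' => ?_⟩, ?_⟩
  · obtain rfl | hne := eq_or_ne T' T
    · simp
    · rw [Function.update_of_ne hne]
      exact (hL.subset_extensions T').trans (extensions_mono hssub.subset T')
  · obtain rfl | hne := eq_or_ne T' T
    · simpa using hfew
    · simpa [hne] using hL.card_le T'
  · have hTmem : T ∈ ∂ F := erase_mem_shadow hA hy
    calc #F ≤ #{B ∈ F | ¬T ⊆ B} + #(extensions F T) :=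
          card_le_card_filter_not_subset_add_card_extensions (hTcard ▸ hF)
      _ ≤ ∑ T' ∈ ∂ F, #(L T') + #(extensions F T) := by
          gcongr
          exact hcard.trans (sum_le_sum_of_subset (shadow_mono hssub.subset))
      _ = ∑ T' ∈ ∂ F, #(Function.update L T (extensions F T) T') := by
          rw [← add_sum_erase _ _ hTmem, ← add_sum_erase _ _ hTmem, hLT, card_empty, zero_add,
            Function.update_self, add_comm]
          congr 1
          exact sum_congr rfl fun T' hT' => by rw [Function.update_of_ne (ne_of_mem_erase hT')]

theorem exists_isSelection_of_not_hasLoosePath (hF : (F : Set (Finset α)).Sized (a + 1))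
    (ha : 1 ≤ a) (hfree : ¬HasLoosePath F ℓ) :
    ∃ L, IsSelection F (ℓ * (a + 1)) L ∧ #F ≤ ∑ T ∈ ∂ F, #(L T) :=
  exists_isSelection_of_forall_not_isFull hF fun _ hGF hne hfull =>
    hfree ((hfull.hasLoosePath (hF.mono (coe_subset.2 hGF)) (by omega) hne).mono hGF)

end Full

section Counting

variable {α ι : Type*}

theorem mul_sum_le_of_forall_mul_mul_le {s : Finset ι} {f : ι → ℕ} {M q B : ℕ} (hq : 0 < q)
    (hs : #s ≤ q) (hf : ∀ i ∈ s, M * q * f i ≤ B) : M * ∑ i ∈ s, f i ≤ B := by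
  refine Nat.le_of_mul_le_mul_left ?_ hq
  calc q * (M * ∑ i ∈ s, f i) = ∑ i ∈ s, M * q * f i := by rw [← mul_sum]; ring
    _ ≤ #s * B := sum_le_card_nsmul _ _ _ hf
    _ ≤ q * B := by gcongr

theorem sum_add_card_filter_lt_le {s : Finset ι} {f : ι → ℕ} {q : ℕ} (hf : ∀ i ∈ s, f i ≤ q)
    (t : ℕ) : ∑ i ∈ s, f i + #{i ∈ s | f i < t} ≤ q * #{i ∈ s | t < f i} + t * #s := by
  rw [card_filter, card_filter, card_eq_sum_ones s, mul_sum, mul_sum, ← sum_add_distrib,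
    ← sum_add_distrib]
  refine sum_le_sum fun i hi => ?_
  have := hf i hi
  split_ifs <;> omega

theorem exists_card_le_card_mul_card_fiber [DecidableEq α] {s : Finset ι} {t : Finset α}
    {f : ι → α} (hf : ∀ i ∈ s, f i ∈ t) (hs : s.Nonempty) :
    ∃ y ∈ t, #s ≤ #t * #{i ∈ s | f i = y} := by
  obtain ⟨i, hi⟩ := hs
  obtain ⟨y, hy, hmax⟩ := exists_max_image t (fun y => #{i ∈ s | f i = y}) ⟨f i, hf i hi⟩
  refine ⟨y, hy, ?_⟩
  rw [card_eq_sum_card_fiberwise hf]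
  exact sum_le_card_nsmul _ _ _ hmax

theorem exists_subset_forall_le_mul_card_filter_mem [DecidableEq α] {R : Finset (Finset α)}
    {V : Finset α} {m N : ℕ} (hV : ∀ T ∈ R, T ⊆ V) (hcard : m * #V < N * #R) :
    ∃ R' ⊆ R, R'.Nonempty ∧ ∀ T ∈ R', ∀ v ∈ T, m ≤ N * #{T ∈ R' | v ∈ T} := by
  induction V using Finset.strongInduction generalizing R with
  | H V ih =>
  by_cases hdeg : ∀ T ∈ R, ∀ v ∈ T, m ≤ N * #{T ∈ R | v ∈ T}
  · exact ⟨R, Subset.rfl, card_pos.1 (pos_of_mul_pos_right (by omega) N.zero_le), hdeg⟩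
  push Not at hdeg
  obtain ⟨T, hT, v, hvT, hlow⟩ := hdeg
  have hv : v ∈ V := hV T hT hvT
  obtain ⟨R', hR', hR'deg⟩ := ih (V.erase v) (erase_ssubset hv) (R := {T ∈ R | v ∉ T})
    (fun T hT => subset_erase.2 ⟨hV T (mem_filter.1 hT).1, (mem_filter.1 hT).2⟩) (by
      rw [← card_erase_add_one hv, ← card_filter_add_card_filter_not (s := R) (v ∈ ·)] at hcard
      linarith)
  exact ⟨R', hR'.trans (filter_subset _ _), hR'deg⟩

variable [Fintype α] [DecidableEq α]

theorem card_filter_subset_le_pow {R : Finset (Finset α)} {a : ℕ}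
    (hR : (R : Set (Finset α)).Sized a) (Z : Finset α) :
    #{T ∈ R | Z ⊆ T} ≤ Fintype.card α ^ (a - #Z) := by
  calc #{T ∈ R | Z ⊆ T} ≤ #(powersetCard (a - #Z) (univ : Finset α)) := by
        refine card_le_card_of_injOn (· \ Z) (fun T hT => ?_) fun T hT T' hT' heq => ?_
        · obtain ⟨hTR, hZT⟩ := mem_filter.1 hT
          exact mem_powersetCard.2 ⟨subset_univ _, by rw [card_sdiff_of_subset hZT, hR hTR]⟩
        · rw [← sdiff_union_of_subset (mem_filter.1 hT).2,
            ← sdiff_union_of_subset (mem_filter.1 hT').2]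
          exact congrArg (· ∪ Z) heq
    _ ≤ Fintype.card α ^ (a - #Z) := by
        rw [card_powersetCard, card_univ]
        exact Nat.choose_le_pow _ _

theorem card_filter_subset_and_not_disjoint_le {R : Finset (Finset α)} {a : ℕ}
    (hR : (R : Set (Finset α)).Sized a) {Y W : Finset α} (hYW : Disjoint Y W) :
    #{T ∈ R | Y ⊆ T ∧ ¬Disjoint T W} ≤ #W * Fintype.card α ^ (a - (#Y + 1)) := by
  have hsub : {T ∈ R | Y ⊆ T ∧ ¬Disjoint T W} ⊆ W.biUnion fun w => {T ∈ R | insert w Y ⊆ T} := by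
    intro T hT
    obtain ⟨hTR, hYT, hTW⟩ := mem_filter.1 hT
    obtain ⟨w, hwT, hwW⟩ := not_disjoint_iff.1 hTW
    exact mem_biUnion.2 ⟨w, hwW, mem_filter.2 ⟨hTR, insert_subset hwT hYT⟩⟩
  refine (card_le_card hsub).trans (card_biUnion_le_card_mul _ _ _ fun w hw => ?_)
  rw [← card_insert_of_notMem (disjoint_right.1 hYW hw)]
  exact card_filter_subset_le_pow hR _

/-- The elements lying in at least `D / H` of the sets `L i`, `i ∈ P`. -/
def popularElements (P : Finset ι) (L : ι → Finset α) (H D : ℕ) : Finset α :=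
  {x | D ≤ H * #{i ∈ P | x ∈ L i}}

theorem mem_popularElements {P : Finset ι} {L : ι → Finset α} {H D : ℕ} {x : α} :
    x ∈ popularElements P L H D ↔ D ≤ H * #{i ∈ P | x ∈ L i} := by
  simp [popularElements]

theorem card_popularElements_mul_le {P : Finset ι} {L : ι → Finset α} {q : ℕ}
    (hL : ∀ i ∈ P, #(L i) ≤ q) (H D : ℕ) :
    #(popularElements P L H D) * D ≤ H * (#P * q) := by
  calc #(popularElements P L H D) * D
      ≤ ∑ x ∈ popularElements P L H D, H * #{i ∈ P | x ∈ L i} :=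
        card_nsmul_le_sum _ _ _ fun x => mem_popularElements.1
    _ ≤ ∑ x, H * #{i ∈ P | x ∈ L i} := sum_le_sum_of_subset (subset_univ _)
    _ = H * ∑ i ∈ P, #(L i) := by
        rw [← mul_sum]
        congr 1
        simpa [bipartiteAbove, bipartiteBelow]
          using sum_card_bipartiteAbove_eq_sum_card_bipartiteBelow (s := univ) (t := P)
            (fun x i => x ∈ L i)
    _ ≤ H * (#P * q) := by
        gcongr
        exact sum_le_card_nsmul _ _ _ hL

end Counting

section SpreadColouring

variable {α : Type*} [Fintype α] [DecidableEq α] {F R : Finset (Finset α)} {c : Finset α → α}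
  {r q N ℓ : ℕ}

theorem exists_mem_disjoint_of_card_lt (hR : (R : Set (Finset α)).Sized (r + 2))
    {Q W : Finset α} {v : α} (hvQ : v ∉ Q)
    (hlt : #Q * Fintype.card α ^ r + ∑ w ∈ W, #{T ∈ {T ∈ R | c T = w} | v ∈ T} <
      #{T ∈ R | v ∈ T}) :
    ∃ T ∈ R, v ∈ T ∧ Disjoint T Q ∧ c T ∉ W := by
  by_contra! hcon
  have hsub : {T ∈ R | v ∈ T} ⊆ {T ∈ R | {v} ⊆ T ∧ ¬Disjoint T Q} ∪
      W.biUnion fun w => {T ∈ {T ∈ R | c T = w} | v ∈ T} := by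
    intro T hT
    obtain ⟨hTR, hvT⟩ := mem_filter.1 hT
    by_cases hTQ : Disjoint T Q
    · simp [hTR, hvT, hcon T hTR hvT hTQ]
    · simp [hTR, hvT, hTQ]
  refine hlt.not_ge ((card_le_card hsub).trans ((card_union_le _ _).trans ?_))
  gcongr
  · exact card_filter_subset_and_not_disjoint_le hR (disjoint_singleton_left.2 hvQ)
  · exact card_biUnion_le

theorem mul_card_popularElements_le [Nonempty α] {C : Finset (Finset α)} {H : ℕ}
    (hC : (C : Set (Finset α)).Sized (r + 2))
    (hcard : H ^ 2 * (r + 2) * #C ≤ Fintype.card α ^ (r + 2)) :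
    H * #(popularElements C id H (Fintype.card α ^ (r + 1))) ≤ Fintype.card α := by
  refine Nat.le_of_mul_le_mul_right ?_ (pow_pos (Fintype.card_pos (α := α)) (r + 1))
  have := card_popularElements_mul_le (P := C) (L := id) (fun T hT => (hC hT).le) H
    (Fintype.card α ^ (r + 1))
  calc H * #(popularElements C id H (Fintype.card α ^ (r + 1))) * Fintype.card α ^ (r + 1)
      ≤ H * (H * (#C * (r + 2))) := by rw [mul_assoc]; gcongr
    _ = H ^ 2 * (r + 2) * #C := by ring
    _ ≤ Fintype.card α ^ (r + 2) := hcard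
    _ = Fintype.card α * Fintype.card α ^ (r + 1) := by ring

/-- The vertices lying in at least a `1 / H` fraction of `n ^ (r + 1)` members of `R` of colour `w`.
For `(r + 2)`-sets on `n` vertices, `n ^ (r + 1)` is the order of the largest possible degree. -/
def heavyVertices (R : Finset (Finset α)) (c : Finset α → α) (r H : ℕ) (w : α) : Finset α :=
  popularElements {T ∈ R | c T = w} id H (Fintype.card α ^ (r + 1))

/-- A vertex `v` of large degree that is light for the colours in `W` lies in a member of `R` whose
colour avoids `W` and whose other vertices avoid `W` and are light for the colours in `W`. -/
theorem exists_mem_forall_notMem_heavyVertices [Nonempty α]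
    (hR : (R : Set (Finset α)).Sized (r + 2)) (hq : 1 ≤ q)
    (hn : 8 * N * q ≤ Fintype.card α)
    (hclass : ∀ w, (8 * N * q) ^ 2 * (r + 2) * #{T ∈ R | c T = w} ≤ Fintype.card α ^ (r + 2))
    {W' W : Finset α} {v : α} (hW' : W' ⊆ W) (hW : #W ≤ q)
    (hdeg : Fintype.card α ^ (r + 1) ≤ 2 * N * #{T ∈ R | v ∈ T})
    (hlight : ∀ w ∈ W', v ∉ heavyVertices R c r (8 * N * q) w) :
    ∃ T ∈ R, v ∈ T ∧ c T ∉ W' ∧ ∀ z ∈ T, z ≠ v →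
      z ∉ W ∧ ∀ w ∈ W, z ∉ heavyVertices R c r (8 * N * q) w := by
  set n := Fintype.card α
  set heavy := heavyVertices R c r (8 * N * q)
  set Q := (W ∪ W.biUnion heavy).erase v with hQ
  have hheavy : 8 * N * ∑ w ∈ W, #(heavy w) ≤ n := mul_sum_le_of_forall_mul_mul_le hq hW fun w _ =>
    mul_card_popularElements_le (hR.mono (coe_subset.2 (filter_subset _ _))) (hclass w)
  have hclassdeg : 8 * N * ∑ w ∈ W', #{T ∈ {T ∈ R | c T = w} | v ∈ T} ≤ n ^ (r + 1) :=
    mul_sum_le_of_forall_mul_mul_le hq ((card_le_card hW').trans hW) fun w hw =>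
      (not_le.1 (mt mem_popularElements.2 (hlight w hw))).le
  have hQcard : 8 * N * #Q ≤ 2 * n := calc
    8 * N * #Q ≤ 8 * N * (#W + ∑ w ∈ W, #(heavy w)) := by
      gcongr
      exact (card_le_card (erase_subset _ _)).trans
        ((card_union_le _ _).trans (by gcongr; exact card_biUnion_le))
    _ ≤ 8 * N * (q + ∑ w ∈ W, #(heavy w)) := by gcongr
    _ ≤ 2 * n := by rw [mul_add]; omega
  have hlt : #Q * n ^ r + ∑ w ∈ W', #{T ∈ {T ∈ R | c T = w} | v ∈ T} < #{T ∈ R | v ∈ T} := by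
    refine Nat.lt_of_mul_lt_mul_left (a := 8 * N) ?_
    have hpos : 0 < n ^ (r + 1) := pow_pos Fintype.card_pos _
    calc 8 * N * (#Q * n ^ r + ∑ w ∈ W', #{T ∈ {T ∈ R | c T = w} | v ∈ T})
        = 8 * N * #Q * n ^ r + 8 * N * ∑ w ∈ W', #{T ∈ {T ∈ R | c T = w} | v ∈ T} := by ring
      _ ≤ 2 * n * n ^ r + n ^ (r + 1) := by gcongr
      _ < 4 * n ^ (r + 1) := by rw [mul_assoc, ← pow_succ']; omega
      _ ≤ 8 * N * #{T ∈ R | v ∈ T} := by linarith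
  obtain ⟨T, hT, hvT, hTQ, hcT⟩ := exists_mem_disjoint_of_card_lt hR (by simp [hQ]) hlt
  refine ⟨T, hT, hvT, hcT, fun z hz hzv => ?_⟩
  simpa [hQ, hzv] using disjoint_left.1 hTQ hz

theorem hasLoosePath_of_forall_le_mul_card_filter_mem [Nonempty α]
    (hF : (F : Set (Finset α)).Sized (r + 3)) (hR : (R : Set (Finset α)).Sized (r + 2))
    (hc : ∀ T ∈ R, c T ∈ extensions F T) (hq : 1 ≤ q) (hℓ : ℓ * (r + 3) ≤ q)
    (hn : 8 * N * q ≤ Fintype.card α) (hne : R.Nonempty)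
    (hdeg : ∀ T ∈ R, ∀ v ∈ T, Fintype.card α ^ (r + 1) ≤ 2 * N * #{T ∈ R | v ∈ T})
    (hclass : ∀ w, (8 * N * q) ^ 2 * (r + 2) * #{T ∈ R | c T = w} ≤ Fintype.card α ^ (r + 2)) :
    HasLoosePath F ℓ := by
  refine hasLoosePath_of_greedy hF (fun W v => v ∉ W ∧ (∃ T ∈ R, v ∈ T) ∧
    ∀ w ∈ W, v ∉ heavyVertices R c r (8 * N * q) w) ?_ ?_
  · obtain ⟨T, hT⟩ := hne
    obtain ⟨v, hv⟩ : T.Nonempty := by rw [← card_pos, hR hT]; omega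
    exact ⟨insert (c T) T, (mem_extensions.1 (hc T hT)).2, v, mem_insert_of_mem hv, by simp,
      ⟨T, hT, hv⟩, by simp⟩
  · rintro W' W v hW'W hW ⟨hvW', ⟨T₀, hT₀, hvT₀⟩, hlight⟩
    obtain ⟨T, hT, hvT, hcT, hrest⟩ := exists_mem_forall_notMem_heavyVertices hR hq hn hclass
      hW'W (hW.trans hℓ) (hdeg T₀ hT₀ v hvT₀) hlight
    obtain ⟨v', hv', hne'⟩ := exists_mem_ne (by rw [hR hT]; omega : 1 < #T) v
    refine ⟨insert (c T) T, (mem_extensions.1 (hc T hT)).2, mem_insert_of_mem hvT, ?_, v',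
      mem_insert_of_mem hv', (hrest v' hv' hne').1, ⟨T, hT, hv'⟩, (hrest v' hv' hne').2⟩
    refine disjoint_insert_left.2 ⟨hcT, disjoint_left.2 fun z hz hzW' => ?_⟩
    obtain rfl | hzv := eq_or_ne z v
    · exact hvW' hzW'
    · exact (hrest z hz hzv).1 (hW'W hzW')

theorem hasLoosePath_of_spread_colouring (hF : (F : Set (Finset α)).Sized (r + 3))
    (hR : (R : Set (Finset α)).Sized (r + 2)) (hc : ∀ T ∈ R, c T ∈ extensions F T)
    (hN : 1 ≤ N) (hq : 1 ≤ q) (hℓ : ℓ * (r + 3) ≤ q) (hn : 8 * N * q ≤ Fintype.card α)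
    (hcard : Fintype.card α ^ (r + 2) ≤ N * #R)
    (hclass : ∀ w, (8 * N * q) ^ 2 * (r + 2) * #{T ∈ R | c T = w} ≤ Fintype.card α ^ (r + 2)) :
    HasLoosePath F ℓ := by
  have hpos : 0 < Fintype.card α := (by positivity : 0 < 8 * N * q).trans_le hn
  have : Nonempty α := Fintype.card_pos_iff.1 hpos
  obtain ⟨R', hR'R, hne, hdeg⟩ := exists_subset_forall_le_mul_card_filter_mem (R := R) (V := univ)
    (m := Fintype.card α ^ (r + 1)) (N := 2 * N) (fun T _ => subset_univ T) (by
      have : 0 < Fintype.card α ^ (r + 2) := by positivity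
      rw [card_univ, ← pow_succ]
      linarith)
  refine hasLoosePath_of_forall_le_mul_card_filter_mem hF (hR.mono (coe_subset.2 hR'R))
    (fun T hT => hc T (hR'R hT)) hq hℓ hn hne hdeg fun w => le_trans ?_ (hclass w)
  gcongr

end SpreadColouring

section CommonLink

variable {α : Type*} {T : ℕ → Finset α}

theorem pairwiseDisjoint_Iio_cons {B : Finset α} {m : ℕ} (hT : (Set.Iio m).PairwiseDisjoint T)
    (hB : ∀ i < m, Disjoint B (T i)) :
    (Set.Iio (m + 1)).PairwiseDisjoint (fun | 0 => B | i + 1 => T i) := by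
  rintro (_ | i) hi (_ | j) hj hij
  · exact absurd rfl hij
  · exact hB j (Nat.succ_lt_succ_iff.1 hj)
  · exact (hB i (Nat.succ_lt_succ_iff.1 hi)).symm
  · exact hT (Nat.succ_lt_succ_iff.1 hi) (Nat.succ_lt_succ_iff.1 hj) (by simpa using hij)

theorem exists_enumeration {S : Finset α} {x₀ : α} (hx₀ : x₀ ∈ S) :
    ∃ x : ℕ → α, x 0 = x₀ ∧ (∀ i < #S, x i ∈ S) ∧ Set.InjOn x (Set.Iio #S) := by
  classical
  set l := x₀ :: (S.erase x₀).toList with hl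
  have hlength : l.length = #S := by simp [hl, card_erase_add_one hx₀]
  have hnodup : l.Nodup := List.nodup_cons.2 ⟨by simp, nodup_toList _⟩
  have hmem : ∀ y ∈ l, y ∈ S := by simp [hl, hx₀]
  refine ⟨fun i => l.getD i x₀, rfl, fun i hi => ?_, fun i hi j hj hij => ?_⟩
  · rw [← hlength] at hi
    simpa only [List.getD_eq_getElem _ _ hi] using hmem _ (List.getElem_mem hi)
  · rw [Set.mem_Iio, ← hlength] at hi hj
    simp only [List.getD_eq_getElem _ _ hi, List.getD_eq_getElem _ _ hj] at hij
    exact hnodup.getElem_inj_iff.1 hij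

theorem exists_pairwiseDisjoint_of_card_lt [Fintype α] {R : Finset (Finset α)} {a : ℕ}
    (hR : (R : Set (Finset α)).Sized (a + 1)) (m : ℕ) (W : Finset α)
    (hcard : (#W + m * (a + 1)) * Fintype.card α ^ a < #R) :
    ∃ T : ℕ → Finset α, (∀ i < m, T i ∈ R ∧ Disjoint W (T i)) ∧
      (Set.Iio m).PairwiseDisjoint T := by
  classical
  induction m generalizing W with
  | zero => exact ⟨fun _ => ∅, by simp, by simp⟩
  | succ m ih =>
    obtain ⟨B, hB, hBW⟩ : ∃ B ∈ R, Disjoint B W := by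
      have hfew : #{T ∈ R | ∅ ⊆ T ∧ ¬Disjoint T W} < #R :=
        (card_filter_subset_and_not_disjoint_le hR (disjoint_empty_left W)).trans_lt
          (lt_of_le_of_lt (Nat.mul_le_mul (Nat.le_add_right _ _) (by simp)) hcard)
      obtain ⟨B, hB, hBnot⟩ := exists_mem_notMem_of_card_lt_card hfew
      exact ⟨B, hB, by simpa [hB] using hBnot⟩
    have hWB : #(W ∪ B) ≤ #W + (a + 1) := hR hB ▸ card_union_le W B
    obtain ⟨T, hT, hdisj⟩ := ih (W ∪ B)
      (lt_of_le_of_lt (Nat.mul_le_mul_right _ (by linarith)) hcard)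
    refine ⟨fun | 0 => B | i + 1 => T i, ?_, pairwiseDisjoint_Iio_cons hdisj fun i hi =>
      (disjoint_union_left.1 (hT i hi).2).2⟩
    rintro (_ | i) hi
    · exact ⟨hB, hBW.symm⟩
    · exact ⟨(hT i (by omega)).1, (disjoint_union_left.1 (hT i (by omega)).2).1⟩

variable [DecidableEq α] {F : Finset (Finset α)}

/-- Consecutive edges share alternately some `T i` and some `x i`. -/
theorem isLoosePath_zigzag {x : ℕ → α} {t : ℕ} (hx : Set.InjOn x (Set.Iio t))
    (hT : (Set.Iio (t + 1)).PairwiseDisjoint T) (hxT : ∀ i < t, ∀ j < t + 1, x i ∉ T j)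
    (hne : ∀ i < t + 1, (T i).Nonempty) :
    IsLoosePath (fun m => insert (x (m / 2)) (T ((m + 1) / 2))) (2 * t) := by
  intro i j hij hj
  constructor
  · intro hmeet
    obtain ⟨z, hzi, hzj⟩ := not_disjoint_iff.1 hmeet
    rcases mem_insert.1 hzi with rfl | hzi <;> rcases mem_insert.1 hzj with hz | hzj
    · have := hx (Set.mem_Iio.2 (by omega)) (Set.mem_Iio.2 (by omega)) hz
      omega
    · exact absurd hzj (hxT _ (by omega) _ (by omega))
    · exact absurd (hz ▸ hzi) (hxT _ (by omega) _ (by omega))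
    · have := hT.elim (Set.mem_Iio.2 (by omega)) (Set.mem_Iio.2 (by omega))
        (not_disjoint_iff.2 ⟨z, hzi, hzj⟩)
      omega
  · rintro rfl
    rw [not_disjoint_iff]
    obtain heven | hodd : (i + 1) / 2 = (i + 1 + 1) / 2 ∨ i / 2 = (i + 1) / 2 := by omega
    · obtain ⟨z, hz⟩ := hne ((i + 1) / 2) (by omega)
      exact ⟨z, mem_insert_of_mem hz, mem_insert_of_mem (heven ▸ hz)⟩
    · exact ⟨x (i / 2), mem_insert_self _ _, by simp [← hodd]⟩

theorem hasLoosePath_of_zigzag {x : ℕ → α} {t : ℕ} {A : Finset α}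
    (hx : Set.InjOn x (Set.Iio t)) (hT : (Set.Iio (t + 1)).PairwiseDisjoint T)
    (hxT : ∀ i < t, ∀ j < t + 1, x i ∉ T j) (hne : ∀ i < t + 1, (T i).Nonempty) (hA : A ∈ F)
    (hxA : ∀ i < t, x i ∉ A) (hAT : ∀ i < t, Disjoint A (T (i + 1))) (hAT₀ : ¬Disjoint A (T 0))
    (hF : ∀ i < t, insert (x i) (T i) ∈ F) (hF' : ∀ i < t, insert (x i) (T (i + 1)) ∈ F) :
    HasLoosePath F (2 * t + 1) := by
  refine ⟨_, (isLoosePath_zigzag hx hT hxT hne).cons (A := A) fun j hj => ?_, ?_⟩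
  · rw [disjoint_insert_right, and_iff_right (hxA _ (by omega))]
    rcases j with _ | j
    · simpa using hAT₀
    · simpa [show (j + 1 + 1) / 2 = j / 2 + 1 by omega] using hAT (j / 2) (by omega)
  · rintro (_ | m) hm
    · exact hA
    · obtain heven | hodd : (m + 1) / 2 = m / 2 ∨ (m + 1) / 2 = m / 2 + 1 := by omega
      · simpa [heven] using hF (m / 2) (by omega)
      · simpa [hodd] using hF' (m / 2) (by omega)

variable [Fintype α] {S : Finset α} {a r t : ℕ}

/-- The `a`-sets completed to an edge of `F` by every vertex of `S`. -/
def commonLink (F : Finset (Finset α)) (a : ℕ) (S : Finset α) : Finset (Finset α) :=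
  {T ∈ powersetCard a univ | S ⊆ extensions F T}

theorem mem_commonLink {T : Finset α} : T ∈ commonLink F a S ↔ #T = a ∧ S ⊆ extensions F T := by
  simp [commonLink]

theorem sized_commonLink : (commonLink F a S : Set (Finset α)).Sized a :=
  fun _ hT => (mem_commonLink.1 hT).1

theorem disjoint_of_mem_commonLink {T : Finset α} (hT : T ∈ commonLink F a S) : Disjoint T S :=
  disjoint_right.2 fun _ hx => (mem_extensions.1 ((mem_commonLink.1 hT).2 hx)).1

theorem hasLoosePath_of_lt_card_commonLink (hF : (F : Set (Finset α)).Sized (r + 3))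
    (hlink : (2 * (r + 3) + #S * (r + 2)) * Fintype.card α ^ (r + 1) <
      #(commonLink F (r + 2) S))
    {A T₀ : Finset α} {x₀ : α} (hA : A ∈ F) (hAS : Disjoint A S) (hT₀S : Disjoint T₀ S)
    (hx₀ : x₀ ∈ S) (hx₀T₀ : x₀ ∈ extensions F T₀) (hAT₀ : ¬Disjoint A T₀) :
    HasLoosePath F (2 * #S + 1) := by
  obtain ⟨x, hx_zero, hxS, hx⟩ := exists_enumeration hx₀
  obtain ⟨hx₀_notMem, hx₀F⟩ := mem_extensions.1 hx₀T₀
  have hT₀card : #T₀ = r + 2 := by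
    simpa [card_insert_of_notMem hx₀_notMem] using hF hx₀F
  obtain ⟨T, hT, hdisj⟩ := exists_pairwiseDisjoint_of_card_lt sized_commonLink #S (A ∪ T₀)
    (lt_of_le_of_lt (by
      gcongr
      have := card_union_le A T₀
      rw [hF hA] at this
      omega) hlink)
  simp only [disjoint_union_left] at hT
  set T' : ℕ → Finset α := fun | 0 => T₀ | i + 1 => T i
  have hT'S : ∀ i < #S + 1, Disjoint (T' i) S := by
    rintro (_ | i) hi
    · exact hT₀S
    · exact disjoint_of_mem_commonLink (hT i (by omega)).1
  have hT'card : ∀ i < #S + 1, #(T' i) = r + 2 := by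
    rintro (_ | i) hi
    · exact hT₀card
    · exact sized_commonLink (hT i (by omega)).1
  have hinsert : ∀ i < #S, ∀ y ∈ S, insert y (T i) ∈ F := fun i hi y hy =>
    (mem_extensions.1 ((mem_commonLink.1 (hT i hi).1).2 hy)).2
  refine hasLoosePath_of_zigzag hx (pairwiseDisjoint_Iio_cons hdisj fun i hi => (hT i hi).2.2)
    (fun i hi j hj hmem => disjoint_left.1 (hT'S j hj) hmem (hxS i hi))
    (fun i hi => card_pos.1 (by rw [hT'card i hi]; omega)) hA
    (fun i hi => disjoint_right.1 hAS (hxS i hi)) (fun i hi => (hT i hi).2.1) hAT₀ ?_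
    fun i hi => hinsert i hi _ (hxS i hi)
  rintro (_ | i) hi
  · rwa [hx_zero]
  · exact hinsert i (by omega) _ (hxS _ hi)

theorem card_commonLink_le_of_not_hasLoosePath (hF : (F : Set (Finset α)).Sized (r + 3))
    (hfree : ¬HasLoosePath F (2 * t + 1)) (ht : 1 ≤ t) {Y : Finset α} (hY : t < #Y) :
    #(commonLink F (r + 2) Y) ≤
      (2 * (r + 3) + t * (r + 2)) * Fintype.card α ^ (r + 1) := by
  by_contra! hlink
  obtain ⟨S, hSY, rfl⟩ := exists_subset_card_eq hY.le
  obtain ⟨x₀, hx₀⟩ := card_pos.1 ht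
  obtain ⟨y, hyY, hyS⟩ := exists_mem_notMem_of_card_lt_card hY
  obtain ⟨T₀, hT₀⟩ := card_pos.1 (Nat.zero_le _ |>.trans_lt hlink)
  obtain ⟨hT₀card, hYT₀⟩ := mem_commonLink.1 hT₀
  have hT₀S : Disjoint T₀ S := (disjoint_of_mem_commonLink hT₀).mono_right hSY
  obtain ⟨z, hz⟩ : T₀.Nonempty := card_pos.1 (by omega)
  refine hfree (hasLoosePath_of_lt_card_commonLink hF (hlink.trans_le (card_le_card ?_))
    (mem_extensions.1 (hYT₀ hyY)).2 (disjoint_insert_left.2 ⟨hyS, hT₀S⟩) hT₀S hx₀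
    (hYT₀ (hSY hx₀)) (not_disjoint_iff.2 ⟨z, mem_insert_of_mem hz, hz⟩))
  intro T hT
  rw [mem_commonLink] at hT ⊢
  exact ⟨hT.1, hSY.trans hT.2⟩

end CommonLink

section Structure

variable {α : Type*} [Fintype α] [DecidableEq α] {F : Finset (Finset α)}
  {L : Finset α → Finset α} {r t q N ℓ : ℕ}

theorem mul_card_filter_not_subset_popularElements_le (hF : (F : Set (Finset α)).Sized (r + 3))
    (hfree : ¬HasLoosePath F ℓ) (hL : IsSelection F q L) (hN : 1 ≤ N) (hq : 1 ≤ q)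
    (hℓ : ℓ * (r + 3) ≤ q) (hn : 8 * N * q ≤ Fintype.card α) :
    N * #{T ∈ powersetCard (r + 2) univ | ¬L T ⊆ popularElements (powersetCard (r + 2) univ) L
      ((8 * N * q) ^ 2 * (r + 2)) (Fintype.card α ^ (r + 2))} ≤ Fintype.card α ^ (r + 2) := by
  set X := popularElements (powersetCard (r + 2) (univ : Finset α)) L
    ((8 * N * q) ^ 2 * (r + 2)) (Fintype.card α ^ (r + 2)) with hX
  by_contra! hmany
  have hunpopular : ∀ T, ∃ x, ¬L T ⊆ X → x ∈ L T ∧ x ∉ X := by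
    intro T
    by_cases hT : L T ⊆ X
    · have : 0 < Fintype.card α := lt_of_lt_of_le (by positivity) hn
      exact (Fintype.card_pos_iff.1 this).elim fun x => ⟨x, absurd hT⟩
    · obtain ⟨x, hx⟩ := not_subset.1 hT
      exact ⟨x, fun _ => hx⟩
  choose c hc using hunpopular
  refine hfree (hasLoosePath_of_spread_colouring hF (c := c)
    ((Set.sized_powersetCard _ _).mono (coe_subset.2 (filter_subset _ _)))
    (fun T hT => hL.subset_extensions T (hc T (mem_filter.1 hT).2).1) hN hq hℓ hn hmany.le
    fun w => ?_)
  by_cases hw : w ∈ X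
  · have hempty : {T ∈ {T ∈ powersetCard (r + 2) (univ : Finset α) | ¬L T ⊆ X} | c T = w} = ∅ :=
      filter_eq_empty_iff.2 fun T hT hTw => (hc T (mem_filter.1 hT).2).2 (hTw ▸ hw)
    simp [hempty]
  · rw [hX, mem_popularElements, not_le] at hw
    refine le_trans (Nat.mul_le_mul_left _ (card_le_card fun T hT => ?_)) hw.le
    obtain ⟨hTR, hTw⟩ := mem_filter.1 hT
    obtain ⟨hTcard, hTX⟩ := mem_filter.1 hTR
    exact mem_filter.2 ⟨hTcard, hTw ▸ (hc T hTX).1⟩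

theorem card_filter_subset_and_lt_card_le (hF : (F : Set (Finset α)).Sized (r + 3))
    (hfree : ¬HasLoosePath F (2 * t + 1)) (ht : 1 ≤ t) (hL : IsSelection F q L) (X : Finset α) :
    #{T ∈ powersetCard (r + 2) (univ : Finset α) | L T ⊆ X ∧ t < #(L T)} ≤
      2 ^ #X * ((2 * (r + 3) + t * (r + 2)) * Fintype.card α ^ (r + 1)) := by
  have hsub : {T ∈ powersetCard (r + 2) (univ : Finset α) | L T ⊆ X ∧ t < #(L T)} ⊆
      {Y ∈ X.powerset | t < #Y}.biUnion fun Y => commonLink F (r + 2) Y := by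
    intro T hT
    obtain ⟨hTcard, hTX, htT⟩ := mem_filter.1 hT
    exact mem_biUnion.2 ⟨L T, mem_filter.2 ⟨mem_powerset.2 hTX, htT⟩,
      mem_commonLink.2 ⟨(mem_powersetCard.1 hTcard).2, hL.subset_extensions T⟩⟩
  calc #{T ∈ powersetCard (r + 2) (univ : Finset α) | L T ⊆ X ∧ t < #(L T)}
      ≤ #{Y ∈ X.powerset | t < #Y} *
        ((2 * (r + 3) + t * (r + 2)) * Fintype.card α ^ (r + 1)) :=
        (card_le_card hsub).trans <| card_biUnion_le_card_mul _ _ _ fun Y hY =>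
          card_commonLink_le_of_not_hasLoosePath hF hfree ht (mem_filter.1 hY).2
    _ ≤ 2 ^ #X * ((2 * (r + 3) + t * (r + 2)) * Fintype.card α ^ (r + 1)) := by
        gcongr
        rw [← card_powerset]
        exact card_filter_le _ _

theorem exists_core_of_not_hasLoosePath (r N : ℕ) (ht : 1 ≤ t) (hN : 1 ≤ N) :
    ∃ K n₀ : ℕ, ∀ (α : Type u) [Fintype α] [DecidableEq α], n₀ ≤ Fintype.card α →
      ∀ F : Finset (Finset α), (F : Set (Finset α)).Sized (r + 3) →
      ¬HasLoosePath F (2 * t + 1) → ∀ L, IsSelection F ((2 * t + 1) * (r + 3)) L →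
      ∃ X : Finset α, #X ≤ K ∧
        N * #{T ∈ powersetCard (r + 2) (univ : Finset α) | ¬(L T ⊆ X ∧ #(L T) ≤ t)} ≤
          Fintype.card α ^ (r + 2) := by
  set q := (2 * t + 1) * (r + 3)
  set H := (8 * (2 * N) * q) ^ 2 * (r + 2)
  set M := 2 ^ (H * q) * (2 * (r + 3) + t * (r + 2)) with hM
  refine ⟨H * q, 8 * (2 * N) * q + 2 * N * M, fun α _ _ hn F hF hfree L hL => ?_⟩
  set n := Fintype.card α
  set P := powersetCard (r + 2) (univ : Finset α) with hP
  set X := popularElements P L H (n ^ (r + 2))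
  have hq0 : 1 ≤ q := Nat.mul_pos (by omega) (by omega)
  have hn0 : 0 < n := lt_of_lt_of_le (by positivity) hn
  have hX : #X ≤ H * q := by
    refine Nat.le_of_mul_le_mul_right ?_ (pow_pos hn0 (r + 2))
    calc #X * n ^ (r + 2) ≤ H * (#P * q) :=
          card_popularElements_mul_le (fun T _ => hL.card_le T) _ _
      _ ≤ H * (n ^ (r + 2) * q) := by
          rw [hP, card_powersetCard, card_univ]
          grw [Nat.choose_le_pow]
      _ = H * q * n ^ (r + 2) := by ring
  have hunpopular : 2 * N * #{T ∈ P | ¬L T ⊆ X} ≤ n ^ (r + 2) :=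
    mul_card_filter_not_subset_popularElements_le hF hfree hL (by omega) hq0 le_rfl (by omega)
  have hlarge : 2 * N * #{T ∈ P | L T ⊆ X ∧ t < #(L T)} ≤ n ^ (r + 2) :=
    calc 2 * N * #{T ∈ P | L T ⊆ X ∧ t < #(L T)}
        ≤ 2 * N * (2 ^ (H * q) * ((2 * (r + 3) + t * (r + 2)) * n ^ (r + 1))) := by
          grw [card_filter_subset_and_lt_card_le hF hfree ht hL X, hX]
          norm_num
      _ = 2 * N * M * n ^ (r + 1) := by rw [hM]; ring
      _ ≤ n * n ^ (r + 1) := by gcongr; omega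
      _ = n ^ (r + 2) := by ring
  have hsplit : #{T ∈ P | ¬(L T ⊆ X ∧ #(L T) ≤ t)} ≤
      #{T ∈ P | ¬L T ⊆ X} + #{T ∈ P | L T ⊆ X ∧ t < #(L T)} := by
    refine (card_le_card fun T hT => ?_).trans (card_union_le _ _)
    simp only [mem_union, mem_filter] at hT ⊢
    grind
  exact ⟨X, hX, by nlinarith⟩

end Structure

section Binomial

theorem sum_choose_sub_add_choose_sub (k : ℕ) {n t : ℕ} (ht : t ≤ n) :
    ∑ i ∈ Icc 1 t, (n - i).choose k + (n - t).choose (k + 1) = n.choose (k + 1) := by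
  induction t with
  | zero => simp
  | succ t ih =>
    have hsub : n - t = n - (t + 1) + 1 := by omega
    rw [sum_Icc_succ_top (by omega), ← ih (by omega), hsub, Nat.choose_succ_succ', add_assoc]

theorem pow_le_factorial_mul_choose {a n : ℕ} (h : 2 * a ≤ n) :
    n ^ a ≤ a.factorial * 2 ^ a * n.choose a := by
  calc n ^ a ≤ (2 * (n + 1 - a)) ^ a := by gcongr; omega
    _ = 2 ^ a * (n + 1 - a) ^ a := mul_pow _ _ _
    _ ≤ 2 ^ a * n.descFactorial a := by grw [Nat.pow_sub_le_descFactorial]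
    _ = a.factorial * 2 ^ a * n.choose a := by
        rw [Nat.descFactorial_eq_factorial_mul_choose]; ring

theorem choose_succ_le_choose_sub_add (a : ℕ) {n i : ℕ} (hi : i ≤ n) :
    n.choose (a + 1) ≤ (n - i).choose (a + 1) + i * n ^ a := by
  rw [← sum_choose_sub_add_choose_sub a hi, add_comm]
  gcongr
  calc ∑ j ∈ Icc 1 i, (n - j).choose a ≤ #(Icc 1 i) * n ^ a :=
        sum_le_card_nsmul _ _ _ fun j _ =>
          (Nat.choose_le_pow _ _).trans (Nat.pow_le_pow_left (n.sub_le j) a)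
    _ = i * n ^ a := by simp

theorem mul_choose_succ_le_sum_add (a : ℕ) {n t : ℕ} (ht : t ≤ n) :
    t * n.choose (a + 1) ≤ ∑ i ∈ Icc 1 t, (n - i).choose (a + 1) + t * t * n ^ a := by
  calc t * n.choose (a + 1) = ∑ i ∈ Icc 1 t, n.choose (a + 1) := by simp
    _ ≤ ∑ i ∈ Icc 1 t, ((n - i).choose (a + 1) + t * n ^ a) := by
        refine sum_le_sum fun i hi => ?_
        obtain ⟨-, hit⟩ := mem_Icc.1 hi
        exact (choose_succ_le_choose_sub_add a (hit.trans ht)).trans (by gcongr)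
    _ = ∑ i ∈ Icc 1 t, (n - i).choose (a + 1) + t * t * n ^ a := by
        simp [sum_add_distrib, mul_assoc]

theorem choose_add_mul_choose_add_choose_le {a : ℕ} (ha : 1 ≤ a) (u z : ℕ) :
    z.choose (a + 1) + u * z.choose a + u.choose (a + 1) ≤ (u + z).choose (a + 1) := by
  have hsub : ({(0, a + 1), (1, a), (a + 1, 0)} : Finset (ℕ × ℕ)) ⊆ antidiagonal (a + 1) := by
    simp [insert_subset_iff, add_comm]
  rw [Nat.add_choose_eq]
  refine le_trans (le_of_eq ?_) (sum_le_sum_of_subset hsub)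
  rw [sum_insert (by simp), sum_insert (by simp; omega), sum_singleton]
  simp [add_assoc]

theorem le_mul_of_pow_succ_le_mul_choose {a m n Γ : ℕ} (hmn : m ≤ n)
    (h : n ^ (a + 1) ≤ Γ * m.choose (a + 1)) : n ≤ Γ * m := by
  obtain rfl | hn := n.eq_zero_or_pos
  · exact zero_le
  refine Nat.le_of_mul_le_mul_right ?_ (pow_pos hn a)
  calc n * n ^ a = n ^ (a + 1) := by ring
    _ ≤ Γ * m ^ (a + 1) := h.trans (Nat.mul_le_mul_left _ (Nat.choose_le_pow _ _))
    _ = Γ * m * m ^ a := by ring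
    _ ≤ Γ * m * n ^ a := by gcongr

theorem mul_pow_lt_of_pow_succ_le_mul {a d m n Γ : ℕ} (hn : 0 < n) (hd : Γ * (d + 1) ≤ n)
    (h : n ^ (a + 1) ≤ Γ * m) : d * n ^ a < m := by
  have hdm : Γ * ((d + 1) * n ^ a) ≤ Γ * m := by
    calc Γ * ((d + 1) * n ^ a) = Γ * (d + 1) * n ^ a := by ring
      _ ≤ n * n ^ a := by gcongr
      _ ≤ Γ * m := by rwa [← pow_succ']
  have hΓ : 0 < Γ := Nat.pos_of_mul_pos_right ((pow_pos hn (a + 1)).trans_le h)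
  calc d * n ^ a < (d + 1) * n ^ a := by gcongr; omega
    _ ≤ m := Nat.le_of_mul_le_mul_left hdm hΓ

theorem pow_le_mul_choose_of_le_mul {a m n Γ : ℕ} (hΓ : 0 < Γ) (hn : n ≤ Γ * m)
    (ha : Γ * (2 * a) ≤ n) : n ^ a ≤ Γ ^ a * (a.factorial * 2 ^ a) * m.choose a := by
  have ham : 2 * a ≤ m := Nat.le_of_mul_le_mul_left (ha.trans hn) hΓ
  calc n ^ a ≤ (Γ * m) ^ a := by gcongr
    _ = Γ ^ a * m ^ a := mul_pow _ _ _
    _ ≤ Γ ^ a * (a.factorial * 2 ^ a * m.choose a) := by grw [pow_le_factorial_mul_choose ham]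
    _ = Γ ^ a * (a.factorial * 2 ^ a) * m.choose a := by ring

theorem pow_le_sq_mul_of_mul_le_mul_pow {a n u C Q q b : ℕ} (hu : 0 < u) (hun : u ≤ n)
    (hC : n ^ (a + 1) ≤ Q * C) (hpow : u * C ≤ q * u ^ (a + 2)) (hb : u * C ≤ q * b) :
    n ^ (a + 2) ≤ (Q * q) ^ 2 * b := by
  have hCu : C ≤ q * u ^ (a + 1) := by
    refine Nat.le_of_mul_le_mul_left (hpow.trans_eq ?_) hu
    ring
  have hn : n ≤ Q * q * u := by
    refine Nat.le_of_mul_le_mul_right ?_ (pow_pos (hu.trans_le hun) a)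
    calc n * n ^ a = n ^ (a + 1) := by ring
      _ ≤ Q * (q * u ^ (a + 1)) := hC.trans (Nat.mul_le_mul_left _ hCu)
      _ = Q * q * u * u ^ a := by ring
      _ ≤ Q * q * u * n ^ a := by gcongr
  calc n ^ (a + 2) = n * n ^ (a + 1) := by ring
    _ ≤ Q * q * u * (Q * C) := Nat.mul_le_mul hn hC
    _ = Q * q * Q * (u * C) := by ring
    _ ≤ Q * q * Q * (q * b) := by gcongr
    _ = (Q * q) ^ 2 * b := by ring

end Binomial

section HittingFamily

variable {α : Type*} [DecidableEq α]

theorem filter_powersetCard_disjoint (k : ℕ) (V U : Finset α) :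
    {T ∈ powersetCard k V | Disjoint T U} = powersetCard k (V \ U) := by
  ext T
  simp only [mem_filter, mem_powersetCard, subset_sdiff]
  tauto

variable [Fintype α] {S A : Finset α} {k : ℕ}

/-- The `k`-sets meeting `S`; for `#S = t` this is the extremal family of the theorem. -/
def hittingFamily (k : ℕ) (S : Finset α) : Finset (Finset α) :=
  {A ∈ powersetCard k univ | (A ∩ S).Nonempty}

theorem mem_hittingFamily : A ∈ hittingFamily k S ↔ #A = k ∧ ¬Disjoint A S := by
  simp [hittingFamily, not_disjoint_iff_nonempty_inter]

theorem card_hittingFamily_succ (k : ℕ) (S : Finset α) :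
    #(hittingFamily (k + 1) S) = ∑ i ∈ Icc 1 #S, (Fintype.card α - i).choose k := by
  have hsplit := card_filter_add_card_filter_not (s := powersetCard (k + 1) (univ : Finset α))
    (fun A => (A ∩ S).Nonempty)
  simp only [← not_disjoint_iff_nonempty_inter, not_not, filter_powersetCard_disjoint,
    card_powersetCard, card_univ, card_univ_sdiff] at hsplit
  have := sum_choose_sub_add_choose_sub k (card_le_univ S)
  simp only [hittingFamily, ← not_disjoint_iff_nonempty_inter]
  omega

end HittingFamily

section LargeCommonLink

variable {α : Type*} [Fintype α] [DecidableEq α] {F : Finset (Finset α)}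
  {L : Finset α → Finset α} {a t q : ℕ}

theorem card_filter_card_lt_le (hF : (F : Set (Finset α)).Sized (a + 2))
    (hL : IsSelection F q L) (hFL : #F ≤ ∑ T ∈ ∂ F, #(L T)) (ht : t ≤ Fintype.card α)
    (hcard : ∑ i ∈ Icc 1 t, (Fintype.card α - i).choose (a + 1) ≤ #F) :
    #{T ∈ powersetCard (a + 1) univ | #(L T) < t} ≤
      q * #{T ∈ powersetCard (a + 1) univ | t < #(L T)} + t * t * Fintype.card α ^ a := by
  have hshadow : #F ≤ ∑ T ∈ powersetCard (a + 1) univ, #(L T) :=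
    hFL.trans (sum_le_sum_of_subset hF.shadow.subset_powersetCard_univ)
  have hlow := mul_choose_succ_le_sum_add a ht
  have hcount := sum_add_card_filter_lt_le
    (fun T (_ : T ∈ powersetCard (a + 1) (univ : Finset α)) => hL.card_le T) t
  rw [card_powersetCard, card_univ] at hcount
  omega

theorem choose_le_add_card_filter_card_eq (hF : (F : Set (Finset α)).Sized (a + 2))
    (hL : IsSelection F q L) (hFL : #F ≤ ∑ T ∈ ∂ F, #(L T)) (ht : t ≤ Fintype.card α)
    (hcard : ∑ i ∈ Icc 1 t, (Fintype.card α - i).choose (a + 1) ≤ #F) (X : Finset α) :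
    (Fintype.card α).choose (a + 1) ≤
      (q + 1) * #{T ∈ powersetCard (a + 1) univ | ¬(L T ⊆ X ∧ #(L T) ≤ t)} +
        t * t * Fintype.card α ^ a +
        #{T ∈ powersetCard (a + 1) univ | L T ⊆ X ∧ #(L T) = t} := by
  set P := powersetCard (a + 1) (univ : Finset α) with hP
  have hcover : #P ≤ #{T ∈ P | ¬(L T ⊆ X ∧ #(L T) ≤ t)} + #{T ∈ P | #(L T) < t} +
      #{T ∈ P | L T ⊆ X ∧ #(L T) = t} := by
    rw [add_assoc]
    refine (card_le_card fun T hT => ?_).trans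
      ((card_union_le _ _).trans (Nat.add_le_add_left (card_union_le _ _) _))
    simp only [mem_union, mem_filter, hT, true_and]
    grind
  have hlarge : #{T ∈ P | t < #(L T)} ≤ #{T ∈ P | ¬(L T ⊆ X ∧ #(L T) ≤ t)} :=
    card_le_card (monotone_filter_right _ fun T _ hT h => hT.not_ge h.2)
  have hsmall : #{T ∈ P | #(L T) < t} ≤ _ := card_filter_card_lt_le hF hL hFL ht hcard
  grw [hlarge] at hsmall
  rw [hP, card_powersetCard, card_univ, ← hP] at hcover
  linarith

theorem exists_card_filter_eq_le_mul_card_commonLink (hL : IsSelection F q L) {X : Finset α}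
    (hne : {T ∈ powersetCard a (univ : Finset α) | L T ⊆ X ∧ #(L T) = t}.Nonempty) :
    ∃ S, #S = t ∧ #{T ∈ powersetCard a univ | L T ⊆ X ∧ #(L T) = t} ≤
      2 ^ #X * #(commonLink F a S) := by
  obtain ⟨S, hS, hfiber⟩ := exists_card_le_card_mul_card_fiber (t := powersetCard t X) (f := L)
    (fun T hT => mem_powersetCard.2 (mem_filter.1 hT).2) hne
  refine ⟨S, (mem_powersetCard.1 hS).2, hfiber.trans (Nat.mul_le_mul ?_ ?_)⟩
  · rw [← card_powerset]
    exact card_le_card fun Y hY => mem_powerset.2 (mem_powersetCard.1 hY).1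
  · refine card_le_card fun T hT => ?_
    obtain ⟨hTG, rfl⟩ := mem_filter.1 hT
    exact mem_commonLink.2 ⟨(mem_powersetCard.1 (mem_filter.1 hTG).1).2, hL.subset_extensions T⟩

theorem exists_pow_le_mul_card_commonLink (r : ℕ) (ht : 1 ≤ t) :
    ∃ Γ n₀ : ℕ, 0 < Γ ∧ ∀ (α : Type u) [Fintype α] [DecidableEq α], n₀ ≤ Fintype.card α →
      ∀ F : Finset (Finset α), (F : Set (Finset α)).Sized (r + 3) →
      ¬HasLoosePath F (2 * t + 1) →
      ∑ i ∈ Icc 1 t, (Fintype.card α - i).choose (r + 2) ≤ #F →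
      ∃ S : Finset α, #S = t ∧
        Fintype.card α ^ (r + 2) ≤ Γ * #(commonLink F (r + 2) S) := by
  set q := (2 * t + 1) * (r + 3)
  set c := (r + 2).factorial * 2 ^ (r + 2)
  have hc0 : 0 < c := by positivity
  obtain ⟨K, n₀, hcore⟩ := exists_core_of_not_hasLoosePath.{u} r (4 * c * (q + 1)) ht
    (Nat.mul_pos (by omega) q.succ_pos)
  refine ⟨2 * c * 2 ^ K, n₀ + 2 * (r + 2) + t + 4 * c * (t * t), by positivity,
    fun α _ _ hn F hF hfree hcard => ?_⟩
  obtain ⟨L, hL, hFL⟩ := exists_isSelection_of_not_hasLoosePath hF (by omega) hfree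
  obtain ⟨X, hX, hbad⟩ := hcore α (by omega) F hF hfree L hL
  set n := Fintype.card α
  set G := {T ∈ powersetCard (r + 2) (univ : Finset α) | L T ⊆ X ∧ #(L T) = t}
  have hGcard : n ^ (r + 2) ≤ 2 * c * #G := by
    have hcount : n.choose (r + 2) ≤
        (q + 1) * #{T ∈ powersetCard (r + 2) univ | ¬(L T ⊆ X ∧ #(L T) ≤ t)} +
          t * t * n ^ (r + 1) + #G :=
      choose_le_add_card_filter_card_eq hF hL hFL (by omega) hcard X
    have hpow : n ^ (r + 2) ≤ c * n.choose (r + 2) := pow_le_factorial_mul_choose (by omega)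
    have herror : 4 * c * (t * t) * n ^ (r + 1) ≤ n ^ (r + 2) := by
      rw [pow_succ' n (r + 1)]
      gcongr
      omega
    grw [hcount] at hpow
    linarith
  have hG0 : G.Nonempty := by
    have : 0 < n ^ (r + 2) := pow_pos (by omega) _
    exact card_pos.1 (pos_of_mul_pos_right (this.trans_le hGcard) (Nat.zero_le _))
  obtain ⟨S, hS, hGS⟩ := exists_card_filter_eq_le_mul_card_commonLink hL hG0
  refine ⟨S, hS, ?_⟩
  calc n ^ (r + 2) ≤ 2 * c * (2 ^ #X * #(commonLink F (r + 2) S)) := by grw [hGcard, hGS]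
    _ ≤ 2 * c * (2 ^ K * #(commonLink F (r + 2) S)) := by gcongr; norm_num
    _ = 2 * c * 2 ^ K * #(commonLink F (r + 2) S) := by ring

end LargeCommonLink

section AvoidingEdges

variable {α : Type*} [DecidableEq α] {F : Finset (Finset α)}
  {L : Finset α → Finset α} {S T U V : Finset α} {a r t q : ℕ} {x : α}

/-- The edges of `F` missing `S`. -/
def avoidingEdges (F : Finset (Finset α)) (S : Finset α) : Finset (Finset α) :=
  {A ∈ F | Disjoint A S}

/-- The vertices covered by the edges of `F` missing `S`. -/
def avoidingVertices (F : Finset (Finset α)) (S : Finset α) : Finset α :=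
  (avoidingEdges F S).biUnion id

theorem disjoint_avoidingVertices : Disjoint (avoidingVertices F S) S :=
  (disjoint_biUnion_left _ _ _).2 fun _ hA => (mem_filter.1 hA).2

theorem card_image_insert_product {𝒯 : Finset (Finset α)} (h𝒯 : ∀ T ∈ 𝒯, Disjoint T S) :
    #((S ×ˢ 𝒯).image fun p => insert p.1 p.2) = #S * #𝒯 := by
  rw [card_image_of_injOn, card_product]
  rintro ⟨x, T⟩ hxT ⟨y, T'⟩ hyT' heq
  simp only [coe_product, Set.mem_prod, mem_coe] at hxT hyT' heq
  have hxT₀ : x ∉ T := disjoint_right.1 (h𝒯 T hxT.2) hxT.1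
  have hxT' : x ∉ T' := disjoint_right.1 (h𝒯 T' hyT'.2) hxT.1
  obtain rfl : x = y := (mem_insert.1 (heq ▸ mem_insert_self x T)).resolve_right hxT'
  rw [← erase_insert hxT₀, heq, erase_insert hxT']

theorem choose_add_mul_choose_le_card_filter_not_disjoint (ha : 1 ≤ a) (hUV : U ⊆ V) :
    (#U).choose (a + 1) + #U * (#(V \ U)).choose a ≤
      #{T ∈ powersetCard (a + 1) V | ¬Disjoint T U} := by
  have hsplit := card_filter_add_card_filter_not (s := powersetCard (a + 1) V) (Disjoint · U)
  have hV := card_sdiff_add_card_eq_card hUV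
  rw [filter_powersetCard_disjoint, card_powersetCard, card_powersetCard, ← hV, add_comm _ (#U)]
    at hsplit
  have := choose_add_mul_choose_add_choose_le ha (#U) (#(V \ U))
  omega

theorem shadow_subset_powersetCard_biUnion (hF : (F : Set (Finset α)).Sized (a + 1)) :
    ∂ F ⊆ powersetCard a (F.biUnion id) := by
  intro T hT
  obtain ⟨A, hA, hTA⟩ := exists_subset_of_mem_shadow hT
  exact mem_powersetCard.2 ⟨hTA.trans (subset_biUnion_of_mem id hA), hF.shadow hT⟩

variable [Fintype α]

/-- An edge missing `S` but meeting `T` would complete a zigzag through `S` to a path of length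
`2 * #S + 1`. -/
theorem disjoint_avoidingVertices_of_mem_extensions (hF : (F : Set (Finset α)).Sized (r + 3))
    (hfree : ¬HasLoosePath F (2 * #S + 1))
    (hlink : (2 * (r + 3) + #S * (r + 2)) * Fintype.card α ^ (r + 1) < #(commonLink F (r + 2) S))
    (hTS : Disjoint T S) (hxS : x ∈ S) (hx : x ∈ extensions F T) :
    Disjoint T (avoidingVertices F S) := by
  refine (disjoint_biUnion_right _ _ _).2 fun A hA => ?_
  by_contra hTA
  obtain ⟨hAF, hAS⟩ := mem_filter.1 hA
  exact hfree (hasLoosePath_of_lt_card_commonLink hF hlink hAF hAS hTS hxS hx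
    fun h => hTA h.symm)

theorem card_add_mul_card_le_card_avoidingEdges_add {𝒯 : Finset (Finset α)}
    (hF : (F : Set (Finset α)).Sized (a + 1)) (h𝒯 : (𝒯 : Set (Finset α)).Sized a)
    (h𝒯S : ∀ T ∈ 𝒯, Disjoint T S) (hext : ∀ T ∈ 𝒯, Disjoint (extensions F T) S) :
    #F + #S * #𝒯 ≤ #(avoidingEdges F S) + #(hittingFamily (a + 1) S) := by
  set M := (S ×ˢ 𝒯).image fun p => insert p.1 p.2 with hM
  have hMF : Disjoint {A ∈ F | ¬Disjoint A S} M := by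
    refine disjoint_right.2 fun A hA hAF => ?_
    obtain ⟨⟨x, T⟩, hxT, rfl⟩ := mem_image.1 hA
    obtain ⟨hx, hT⟩ := mem_product.1 hxT
    exact disjoint_right.1 (hext T hT) hx
      (mem_extensions.2 ⟨disjoint_right.1 (h𝒯S T hT) hx, (mem_filter.1 hAF).1⟩)
  have hsub : {A ∈ F | ¬Disjoint A S} ∪ M ⊆ hittingFamily (a + 1) S := by
    refine union_subset (fun A hA => ?_) fun A hA => ?_
    · obtain ⟨hAF, hAS⟩ := mem_filter.1 hA
      exact mem_hittingFamily.2 ⟨hF hAF, hAS⟩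
    · obtain ⟨⟨x, T⟩, hxT, rfl⟩ := mem_image.1 hA
      obtain ⟨hx, hT⟩ := mem_product.1 hxT
      refine mem_hittingFamily.2 ⟨?_, not_disjoint_iff.2 ⟨x, mem_insert_self x T, hx⟩⟩
      rw [card_insert_of_notMem (disjoint_right.1 (h𝒯S T hT) hx), h𝒯 hT]
  have hcard := card_le_card hsub
  rw [card_union_of_disjoint hMF, hM, card_image_insert_product h𝒯S] at hcard
  rw [← card_filter_add_card_filter_not (s := F) (Disjoint · S), avoidingEdges]
  omega

theorem mul_choose_add_mul_choose_le_card_avoidingEdges (hF : (F : Set (Finset α)).Sized (r + 3))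
    (hfree : ¬HasLoosePath F (2 * #S + 1))
    (hlink : (2 * (r + 3) + #S * (r + 2)) * Fintype.card α ^ (r + 1) < #(commonLink F (r + 2) S))
    (hcard : #(hittingFamily (r + 3) S) ≤ #F) :
    #S * ((#(avoidingVertices F S)).choose (r + 2) +
      #(avoidingVertices F S) * (#(Sᶜ \ avoidingVertices F S)).choose (r + 1)) ≤
        #(avoidingEdges F S) := by
  set 𝒯 := {T ∈ powersetCard (r + 2) Sᶜ | ¬Disjoint T (avoidingVertices F S)}
  have h𝒯S : ∀ T ∈ 𝒯, Disjoint T S := fun T hT =>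
    disjoint_left.2 fun v hv => mem_compl.1 ((mem_powersetCard.1 (mem_filter.1 hT).1).1 hv)
  have hcount : #F + #S * #𝒯 ≤ #(avoidingEdges F S) + #(hittingFamily (r + 3) S) := by
    refine card_add_mul_card_le_card_avoidingEdges_add hF
      (fun T hT => (mem_powersetCard.1 (mem_filter.1 hT).1).2) h𝒯S fun T hT => ?_
    exact disjoint_left.2 fun x hx hxS => (mem_filter.1 hT).2
      (disjoint_avoidingVertices_of_mem_extensions hF hfree hlink (h𝒯S T hT) hxS hx)
  have h𝒯card : _ ≤ #𝒯 := choose_add_mul_choose_le_card_filter_not_disjoint (by omega)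
    (subset_compl_iff_disjoint_right.2 disjoint_avoidingVertices)
  grw [h𝒯card]
  omega

theorem commonLink_subset_powersetCard (hF : (F : Set (Finset α)).Sized (r + 3))
    (hfree : ¬HasLoosePath F (2 * #S + 1))
    (hlink : (2 * (r + 3) + #S * (r + 2)) * Fintype.card α ^ (r + 1) < #(commonLink F (r + 2) S))
    (hS : S.Nonempty) :
    commonLink F (r + 2) S ⊆ powersetCard (r + 2) (Sᶜ \ avoidingVertices F S) := by
  intro T hT
  obtain ⟨x, hx⟩ := hS
  have hTS := disjoint_of_mem_commonLink hT
  obtain ⟨hTcard, hST⟩ := mem_commonLink.1 hT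
  refine mem_powersetCard.2 ⟨subset_sdiff.2 ⟨subset_compl_iff_disjoint_right.2 hTS, ?_⟩, hTcard⟩
  exact disjoint_avoidingVertices_of_mem_extensions hF hfree hlink hTS hx (hST hx)

theorem card_le_mul_choose_card_biUnion (hF : (F : Set (Finset α)).Sized (a + 1))
    (hL : IsSelection F q L) (hFL : #F ≤ ∑ T ∈ ∂ F, #(L T)) :
    #F ≤ q * (#(F.biUnion id)).choose a := by
  calc #F ≤ #(∂ F) * q := hFL.trans (sum_le_card_nsmul _ _ _ fun T _ => hL.card_le T)
    _ ≤ q * (#(F.biUnion id)).choose a := by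
        rw [mul_comm, ← card_powersetCard]
        grw [shadow_subset_powersetCard_biUnion hF]

theorem card_le_mul_card_filter_lt_add_mul_choose (hF : (F : Set (Finset α)).Sized (a + 1))
    (hL : IsSelection F q L) (hFL : #F ≤ ∑ T ∈ ∂ F, #(L T)) (t : ℕ) :
    #F ≤ q * #{T ∈ powersetCard a univ | t < #(L T)} + t * (#(F.biUnion id)).choose a := by
  have hcount := sum_add_card_filter_lt_le (fun T (_ : T ∈ ∂ F) => hL.card_le T) t
  calc #F ≤ q * #{T ∈ ∂ F | t < #(L T)} + t * #(∂ F) := by omega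
    _ ≤ q * #{T ∈ powersetCard a univ | t < #(L T)} + t * (#(F.biUnion id)).choose a := by
        rw [← card_powersetCard]
        gcongr
        · exact hF.shadow.subset_powersetCard_univ
        · exact shadow_subset_powersetCard_biUnion hF

theorem pow_le_mul_choose_card_compl_sdiff_avoidingVertices {Γ : ℕ}
    (hF : (F : Set (Finset α)).Sized (r + 3)) (hfree : ¬HasLoosePath F (2 * #S + 1))
    (hlink : (2 * (r + 3) + #S * (r + 2)) * Fintype.card α ^ (r + 1) < #(commonLink F (r + 2) S))
    (hS : S.Nonempty) (hΓ : 0 < Γ) (hn : Γ * (2 * (r + 1)) ≤ Fintype.card α)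
    (hpow : Fintype.card α ^ (r + 2) ≤ Γ * #(commonLink F (r + 2) S)) :
    Fintype.card α ^ (r + 1) ≤ Γ ^ (r + 1) * ((r + 1).factorial * 2 ^ (r + 1)) *
      (#(Sᶜ \ avoidingVertices F S)).choose (r + 1) := by
  grw [commonLink_subset_powersetCard hF hfree hlink hS, card_powersetCard] at hpow
  exact pow_le_mul_choose_of_le_mul hΓ
    (le_mul_of_pow_succ_le_mul_choose (card_le_univ _) hpow) hn

theorem pow_le_sq_mul_card_filter_lt {Q : ℕ} (hF : (F : Set (Finset α)).Sized (r + 3))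
    (hfree : ¬HasLoosePath F (2 * #S + 1))
    (hlink : (2 * (r + 3) + #S * (r + 2)) * Fintype.card α ^ (r + 1) < #(commonLink F (r + 2) S))
    (hS : S.Nonempty) (hcard : #(hittingFamily (r + 3) S) ≤ #F)
    (hQ : Fintype.card α ^ (r + 1) ≤ Q * (#(Sᶜ \ avoidingVertices F S)).choose (r + 1))
    (hne : (avoidingEdges F S).Nonempty) (hL : IsSelection (avoidingEdges F S) q L)
    (hFL : #(avoidingEdges F S) ≤ ∑ T ∈ ∂ (avoidingEdges F S), #(L T)) :
    Fintype.card α ^ (r + 2) ≤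
      (Q * q) ^ 2 * #{T ∈ powersetCard (r + 2) univ | #S < #(L T)} := by
  have hB : (avoidingEdges F S : Set (Finset α)).Sized (r + 3) :=
    hF.mono (coe_subset.2 (filter_subset _ _))
  have hu : 0 < #(avoidingVertices F S) := by
    obtain ⟨A, hA⟩ := hne
    have hAU : A ⊆ avoidingVertices F S := subset_biUnion_of_mem id hA
    have := card_le_card hAU
    rw [hB hA] at this
    omega
  have hlow := mul_choose_add_mul_choose_le_card_avoidingEdges hF hfree hlink hcard
  have hpow := card_le_mul_choose_card_biUnion hB hL hFL
  have hlarge := card_le_mul_card_filter_lt_add_mul_choose hB hL hFL #S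
  rw [← avoidingVertices] at hpow hlarge
  set u := #(avoidingVertices F S)
  set C := (#(Sᶜ \ avoidingVertices F S)).choose (r + 1)
  have huC : u * C ≤ #S * (u * C) := Nat.le_mul_of_pos_left _ (card_pos.2 hS)
  rw [mul_add] at hlow
  refine pow_le_sq_mul_of_mul_le_mul_pow hu (card_le_univ _) hQ ?_ (by omega)
  calc u * C ≤ q * u.choose (r + 2) := by omega
    _ ≤ q * u ^ (r + 2) := by grw [Nat.choose_le_pow]

theorem exists_forall_not_disjoint (r : ℕ) (ht : 1 ≤ t) :
    ∃ n₀ : ℕ, ∀ (α : Type u) [Fintype α] [DecidableEq α], n₀ ≤ Fintype.card α →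
      ∀ F : Finset (Finset α), (F : Set (Finset α)).Sized (r + 3) →
      ¬HasLoosePath F (2 * t + 1) →
      ∑ i ∈ Icc 1 t, (Fintype.card α - i).choose (r + 2) ≤ #F →
      ∃ S : Finset α, #S = t ∧ ∀ A ∈ F, ¬Disjoint A S := by
  obtain ⟨Γ, n₁, hΓ, hpopular⟩ := exists_pow_le_mul_card_commonLink.{u} r ht
  set q := (2 * t + 1) * (r + 3)
  set Q := Γ ^ (r + 1) * ((r + 1).factorial * 2 ^ (r + 1))
  obtain ⟨K, n₂, hcore⟩ := exists_core_of_not_hasLoosePath.{u} r (2 * (Q * q) ^ 2) ht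
    (Nat.mul_pos two_pos (by positivity))
  set d := 2 * (r + 3) + t * (r + 2)
  refine ⟨n₁ + n₂ + Γ * (d + 1) + Γ * (2 * (r + 1)), fun α _ _ hn F hF hfree hcard => ?_⟩
  obtain ⟨S, rfl, hpow⟩ := hpopular α (by omega) F hF hfree hcard
  refine ⟨S, rfl, fun A hA hAS => ?_⟩
  set n := Fintype.card α
  have hn0 : 0 < n := lt_of_lt_of_le (by positivity) hn
  have hlink : d * n ^ (r + 1) < #(commonLink F (r + 2) S) :=
    mul_pow_lt_of_pow_succ_le_mul hn0 (by omega) hpow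
  have hS : S.Nonempty := card_pos.1 ht
  have hB : (avoidingEdges F S : Set (Finset α)).Sized (r + 3) :=
    hF.mono (coe_subset.2 (filter_subset _ _))
  have hBfree : ¬HasLoosePath (avoidingEdges F S) (2 * #S + 1) :=
    fun h => hfree (h.mono (filter_subset _ _))
  obtain ⟨L, hL, hBL⟩ := exists_isSelection_of_not_hasLoosePath hB (by omega) hBfree
  obtain ⟨X, -, hbad⟩ := hcore α (by omega) _ hB hBfree L hL
  have hlarge : n ^ (r + 2) ≤ (Q * q) ^ 2 * #{T ∈ powersetCard (r + 2) univ | #S < #(L T)} :=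
    pow_le_sq_mul_card_filter_lt hF hfree hlink hS (by rwa [card_hittingFamily_succ])
      (pow_le_mul_choose_card_compl_sdiff_avoidingVertices hF hfree hlink hS hΓ (by omega) hpow)
      ⟨A, mem_filter.2 ⟨hA, hAS⟩⟩ hL hBL
  have hsub : #{T ∈ powersetCard (r + 2) univ | #S < #(L T)} ≤
      #{T ∈ powersetCard (r + 2) univ | ¬(L T ⊆ X ∧ #(L T) ≤ #S)} :=
    card_le_card (monotone_filter_right _ fun T _ hT h => hT.not_ge h.2)
  have hpos := pow_pos hn0 (r + 2)
  grw [hsub] at hlarge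
  linarith

end AvoidingEdges

section Extremal

theorem exists_eq_hittingFamily {t : ℕ} (r : ℕ) (ht : 1 ≤ t) :
    ∃ n₀ : ℕ, ∀ (α : Type u) [Fintype α] [DecidableEq α], n₀ ≤ Fintype.card α →
      ∀ F : Finset (Finset α), (F : Set (Finset α)).Sized (r + 3) →
      ¬HasLoosePath F (2 * t + 1) →
      ∑ i ∈ Icc 1 t, (Fintype.card α - i).choose (r + 2) ≤ #F →
      ∃ S : Finset α, #S = t ∧ F = hittingFamily (r + 3) S := by
  obtain ⟨n₀, hn₀⟩ := exists_forall_not_disjoint.{u} r ht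
  refine ⟨n₀, fun α _ _ hn F hF hfree hcard => ?_⟩
  obtain ⟨S, rfl, hS⟩ := hn₀ α hn F hF hfree hcard
  exact ⟨S, rfl, eq_of_subset_of_card_le (fun A hA => mem_hittingFamily.2 ⟨hF hA, hS A hA⟩)
    (by rwa [card_hittingFamily_succ])⟩

theorem not_containsLoosePath_hittingFamily {n k ℓ : ℕ} {S : Finset (Fin n)} (hℓ : 3 ≤ ℓ)
    (hS : 2 * #S < ℓ) : ¬ContainsLoosePath k ℓ (hittingFamily k S) := by
  rw [containsLoosePath_iff_hasLoosePath (fun A hA => (mem_hittingFamily.1 hA).1) hℓ]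
  exact not_hasLoosePath_of_forall_not_disjoint (fun A hA => (mem_hittingFamily.1 hA).2) hS

end Extremal

/-- For k ≥ 3, t ≥ 1 and all sufficiently large n, the Turán number of the k-uniform loose
path of length 2t+1 is C(n-1,k-1)+⋯+C(n-t,k-1), and the unique extremal family consists of
all k-subsets of [n] meeting a fixed t-set S. -/
theorem turan_loose_path_odd (k t : ℕ) (hk : 3 ≤ k) (ht : 1 ≤ t) :
    ∃ n₀ : ℕ, ∀ n : ℕ, n₀ ≤ n →
      IsGreatest {m : ℕ | ∃ F : Finset (Finset (Fin n)),
          (∀ A ∈ F, A.card = k) ∧ ¬ ContainsLoosePath k (2 * t + 1) F ∧ F.card = m}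
        (∑ i ∈ Finset.Icc 1 t, (n - i).choose (k - 1)) ∧
      ∀ F : Finset (Finset (Fin n)),
        (∀ A ∈ F, A.card = k) → ¬ ContainsLoosePath k (2 * t + 1) F →
        (F.card = ∑ i ∈ Finset.Icc 1 t, (n - i).choose (k - 1) ↔
          ∃ S : Finset (Fin n), S.card = t ∧
            F = (Finset.powersetCard k Finset.univ).filter (fun A => (A ∩ S).Nonempty)) := by
  obtain ⟨r, rfl⟩ := Nat.exists_eq_add_of_le' hk
  obtain ⟨n₀, hn₀⟩ := exists_eq_hittingFamily.{0} r ht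
  refine ⟨n₀ + t, fun n hn => ?_⟩
  set N := ∑ i ∈ Icc 1 t, (n - i).choose (r + 2)
  have hcard : ∀ S : Finset (Fin n), #S = t → #(hittingFamily (r + 3) S) = N := fun S hS => by
    rw [card_hittingFamily_succ, Fintype.card_fin, hS]
  have hunique : ∀ F : Finset (Finset (Fin n)), (∀ A ∈ F, #A = r + 3) →
      ¬ContainsLoosePath (r + 3) (2 * t + 1) F → N ≤ #F →
      ∃ S : Finset (Fin n), #S = t ∧ F = hittingFamily (r + 3) S := fun F hF hfree hNF =>
    hn₀ (Fin n) (by rw [Fintype.card_fin]; omega) F hF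
      (by rwa [← containsLoosePath_iff_hasLoosePath hF (by omega)]) (by rwa [Fintype.card_fin])
  refine ⟨⟨?_, ?_⟩, fun F hF hfree => ⟨fun hFN => hunique F hF hfree hFN.ge,
    fun ⟨S, hS, hFS⟩ => hFS ▸ hcard S hS⟩⟩
  · obtain ⟨S, -, hS⟩ := exists_subset_card_eq (s := (univ : Finset (Fin n))) (n := t)
      (by rw [card_fin]; omega)
    exact ⟨hittingFamily (r + 3) S, fun A hA => (mem_hittingFamily.1 hA).1,
      not_containsLoosePath_hittingFamily (by omega) (by omega), hcard S hS⟩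
  · rintro m ⟨F, hF, hfree, rfl⟩
    by_contra! hNF
    obtain ⟨S, hS, rfl⟩ := hunique F hF hfree hNF.le
    exact hNF.ne' (hcard S hS)
end

section
/- Let k, ℓ, t, q be positive integers with k ≥ 4. There exists a constant C = C(k,ℓ,t,q) such that for all sufficiently large n, the maximum number of edges in a k-uniform hypergraph on n vertices containing neither a copy of P^{(k)}_ℓ nor a copy of [K_{t+1,q}]^{(k)} is at most t·C(n−1,k−1) + C·n^{k−2+2/(k−1)}. -/
open Finset

/-- The family `F` of k-sets contains a k-uniform linear path of length ℓ:
distinct members `P 0, …, P (ℓ-1)` with consecutive members meeting in exactly one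
vertex and non-consecutive members disjoint. -/
def ContainsLinearPath (k ℓ : ℕ) {n : ℕ} (F : Finset (Finset (Fin n))) : Prop :=
  ∃ P : Fin ℓ → Finset (Fin n), Function.Injective P ∧
    (∀ i, P i ∈ F) ∧ (∀ i, (P i).card = k) ∧
    (∀ i j : Fin ℓ, (i : ℕ) + 1 = (j : ℕ) → (P i ∩ P j).card = 1) ∧
    (∀ i j : Fin ℓ, (i : ℕ) + 1 < (j : ℕ) → P i ∩ P j = ∅)

/-- The family `F` of k-sets contains a copy of the k-blowup `H^{(k)}` of the graph `H`. -/
def ContainsBlowup (k : ℕ) {α : Type*} (H : SimpleGraph α) {n : ℕ}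
    (F : Finset (Finset (Fin n))) : Prop :=
  ∃ φ : α → Fin n, Function.Injective φ ∧
    ∃ E : Sym2 α → Finset (Fin n),
      (∀ e ∈ H.edgeSet, E e ∈ F ∧ (E e).card = k ∧ ∀ a : α, (a ∈ e ↔ φ a ∈ E e)) ∧
      (∀ e ∈ H.edgeSet, ∀ e' ∈ H.edgeSet, e ≠ e' →
        ∀ v, v ∈ E e → v ∈ E e' → ∃ a : α, a ∈ e ∧ a ∈ e' ∧ v = φ a)

/-!
A *kernel* of `F` is a set that extends to members of `F` avoiding, outside the set itself, any
prescribed set of bounded size. All but `O(n ^ (k - 2))` members are *regular*: inside them the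
kernels are closed under intersection. A regular member over which the two-element kernels do not
form a star has one-vertex kernels away from any given vertex, so if some such members survive `ℓ`
rounds of regularization they can be chained into a linear path of length `ℓ`.

The graph of two-element kernels contains neither a path on `ℓ + 1` vertices nor `K_{t+1,q}`,
because kernels extend greedily to a blowup. Hence it is degenerate and has an orientation of
bounded out-degree. All but `O(n ^ (k - 2))` of the members spanning a star consist of a
`(k - 1)`-set `B` and a vertex to which every vertex of `B` points, and all but `O(n)` of the sets
`B` have at most `t` such vertices. The resulting error term is `O(n ^ (k - 2))`.
-/

section Kernels

variable {V : Type*}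

/-- Some vertex of `A` is joined in `G` to all other vertices of `A`. -/
def SpansStar (G : SimpleGraph V) (A : Finset V) : Prop :=
  ∃ c ∈ A, ∀ y ∈ A, y ≠ c → G.Adj c y

lemma SpansStar.mono {G G' : SimpleGraph V} {A : Finset V} (hGG' : G ≤ G') (hA : SpansStar G A) :
    SpansStar G' A :=
  let ⟨c, hc, hcA⟩ := hA
  ⟨c, hc, fun y hy hyc ↦ hGG' (hcA y hy hyc)⟩

variable [DecidableEq V] {s k : ℕ} {F F' : Finset (Finset V)} {A D K W : Finset V}

/-- `K` is a kernel of `F` if it extends to a member of `F` that avoids any prescribed set of at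
most `s` further vertices. This is the form in which the kernel of a sunflower with many petals is
used; note that members of `F` are kernels as well. -/
def IsKernel (s : ℕ) (F : Finset (Finset V)) (K : Finset V) : Prop :=
  ∀ S : Finset V, #S ≤ s → ∃ A ∈ F, K ⊆ A ∧ A ∩ S ⊆ K

lemma IsKernel.mono (hFF' : F ⊆ F') (hK : IsKernel s F K) : IsKernel s F' K := fun S hS ↦
  let ⟨A, hA, hKA, hAS⟩ := hK S hS
  ⟨A, hFF' hA, hKA, hAS⟩

lemma isKernel_of_mem (hA : A ∈ F) : IsKernel s F A := fun _ _ ↦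
  ⟨A, hA, Subset.rfl, inter_subset_left⟩

lemma IsKernel.exists_superset_mem (hK : IsKernel s F K) : ∃ A ∈ F, K ⊆ A :=
  let ⟨A, hA, hKA, _⟩ := hK ∅ (by simp)
  ⟨A, hA, hKA⟩

/-- The graph whose edges are the two-element kernels of `F`. -/
def kernelGraph (s : ℕ) (F : Finset (Finset V)) : SimpleGraph V where
  Adj x y := x ≠ y ∧ IsKernel s F {x, y}
  symm := ⟨fun x y h ↦ ⟨h.1.symm, pair_comm x y ▸ h.2⟩⟩
  loopless := ⟨fun _ h ↦ h.1 rfl⟩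

lemma kernelGraph_mono (hFF' : F ⊆ F') : kernelGraph s F ≤ kernelGraph s F' :=
  fun _ _ h ↦ ⟨h.1, h.2.mono hFF'⟩

/-- The kernels of `F` inside `A` behave as in Füredi's intersection semilattice lemma: they are
closed under intersection, and each subset of `A` missing at least two vertices of `A` lies in a
proper one. -/
structure HasRegularKernels (s : ℕ) (F : Finset (Finset V)) (A : Finset V) : Prop where
  inter : ∀ K ⊆ A, ∀ K' ⊆ A, IsKernel s F K → IsKernel s F K' → IsKernel s F (K ∩ K')
  exists_ssubset : ∀ D ⊆ A, #D + 2 ≤ #A → ∃ K ⊂ A, D ⊆ K ∧ IsKernel s F K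

lemma HasRegularKernels.isKernel_of_separated (hreg : HasRegularKernels s F A) (hA : A ∈ F)
    (hWA : W ⊆ A) (hsep : ∀ u ∈ A, u ∉ W → ∃ K ⊆ A, W ⊆ K ∧ u ∉ K ∧ IsKernel s F K) :
    IsKernel s F W := by
  obtain ⟨L, hLA, ⟨hWL, hL⟩, hLmin⟩ := exists_minimal_le_of_wellFoundedLT
    (fun K ↦ W ⊆ K ∧ IsKernel s F K) A ⟨hWA, isKernel_of_mem hA⟩
  suffices hLW : L ⊆ W from hWL.antisymm hLW ▸ hL
  intro u huL
  by_contra huW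
  obtain ⟨K, hKA, hWK, huK, hK⟩ := hsep u (hLA huL) huW
  have hLK : L ⊆ L ∩ K :=
    hLmin ⟨subset_inter hWL hWK, hreg.inter L hLA K hKA hL hK⟩ inter_subset_left
  exact huK (mem_inter.1 (hLK huL)).2

lemma HasRegularKernels.exists_isKernel_separating (hreg : HasRegularKernels s F A) {u v : V}
    (hu : u ∈ A) (hv : v ∈ A) (huv : u ≠ v) (hnv : ¬ IsKernel s F (A.erase v)) :
    ∃ K ⊆ A, A \ {u, v} ⊆ K ∧ u ∉ K ∧ IsKernel s F K := by
  have hcard : #(A \ {u, v}) + 2 = #A := by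
    rw [← card_pair huv]
    exact card_sdiff_add_card_eq_card (by grind)
  obtain ⟨K, hKA, hDK, hK⟩ := hreg.exists_ssubset (A \ {u, v}) sdiff_subset hcard.le
  refine ⟨K, hKA.subset, hDK, fun huK ↦ hnv ?_, hK⟩
  have hvK : v ∉ K := fun hvK ↦ hKA.not_subset fun w hw ↦ by grind
  have hKv : K = A.erase v := by
    ext w
    have hwA : w ∈ K → w ∈ A := fun hw ↦ hKA.subset hw
    grind
  exact hKv ▸ hK

lemma HasRegularKernels.spansStar (hreg : HasRegularKernels s F A) (hA : A ∈ F) {c : V}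
    (hc : c ∈ A) (herase : ∀ v ∈ A, v ≠ c → IsKernel s F (A.erase v)) :
    SpansStar (kernelGraph s F) A :=
  ⟨c, hc, fun y hy hyc ↦ ⟨hyc.symm, hreg.isKernel_of_separated hA (by grind) fun u hu huW ↦
    ⟨A.erase u, erase_subset _ _, by grind, notMem_erase _ _, herase u hu (by grind)⟩⟩⟩

lemma HasRegularKernels.exists_isKernel_singleton (hreg : HasRegularKernels s F A) (hA : A ∈ F)
    (hcard : 4 ≤ #A) (hstar : ¬ SpansStar (kernelGraph s F) A) (x : V) :
    ∃ y ∈ A, y ≠ x ∧ IsKernel s F {y} := by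
  obtain ⟨c, hc⟩ : A.Nonempty := card_pos.1 (by omega)
  obtain ⟨v₁, hv₁, -, hnv₁⟩ : ∃ v ∈ A, v ≠ c ∧ ¬ IsKernel s F (A.erase v) := by
    by_contra! h
    exact hstar (hreg.spansStar hA hc h)
  obtain ⟨v₂, hv₂, hv₂₁, hnv₂⟩ : ∃ v ∈ A, v ≠ v₁ ∧ ¬ IsKernel s F (A.erase v) := by
    by_contra! h
    exact hstar (hreg.spansStar hA hv₁ h)
  obtain ⟨y, hyA, hy⟩ : ∃ y ∈ A, y ∉ ({x, v₁, v₂} : Finset V) :=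
    exists_mem_notMem_of_card_lt_card (card_le_three.trans_lt hcard)
  refine ⟨y, hyA, by grind, hreg.isKernel_of_separated hA (by grind) fun u hu huy ↦ ?_⟩
  obtain ⟨v, hv, huv, hyv, hnv⟩ : ∃ v ∈ A, u ≠ v ∧ y ≠ v ∧ ¬ IsKernel s F (A.erase v) := by
    rcases eq_or_ne u v₁ with rfl | huv₁
    · exact ⟨v₂, hv₂, hv₂₁.symm, by grind, hnv₂⟩
    · exact ⟨v₁, hv₁, huv₁, by grind, hnv₁⟩
  obtain ⟨K, hKA, hDK, huK, hK⟩ := hreg.exists_isKernel_separating hu hv huv hnv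
  exact ⟨K, hKA, by grind, huK, hK⟩

open scoped Classical in
/-- The members of `F` inside which the kernels of `F` are regular. -/
noncomputable def regularMembers (s : ℕ) (F : Finset (Finset V)) : Finset (Finset V) :=
  {A ∈ F | HasRegularKernels s F A}

lemma mem_regularMembers : A ∈ regularMembers s F ↔ A ∈ F ∧ HasRegularKernels s F A := by
  simp [regularMembers]

lemma regularMembers_subset : regularMembers s F ⊆ F := fun _ hA ↦ (mem_regularMembers.1 hA).1

end Kernels

section Counting

open scoped Classical in
lemma card_le_card_mul_pow_of_forall_exists_subset {V : Type*} [Fintype V] [Nonempty V]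
    {𝒜 𝒲 : Finset (Finset V)} {k j : ℕ} (h𝒜 : (𝒜 : Set (Finset V)).Sized k)
    (h𝒲 : ∀ W ∈ 𝒲, j ≤ #W) (hsub : ∀ A ∈ 𝒜, ∃ W ∈ 𝒲, W ⊆ A) :
    #𝒜 ≤ #𝒲 * Fintype.card V ^ (k - j) := by
  have hcover : 𝒜 ⊆ 𝒲.biUnion fun W ↦ {A ∈ powersetCard k univ | W ⊆ A} := fun A hA ↦ by
    obtain ⟨W, hW, hWA⟩ := hsub A hA
    simpa using ⟨W, hW, h𝒜 hA, hWA⟩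
  refine (card_le_card hcover).trans (card_biUnion_le_card_mul _ _ _ fun W hW ↦ ?_)
  rcases le_or_gt #W k with hWk | hWk
  · calc #{A ∈ powersetCard k univ | W ⊆ A}
        = (Fintype.card V - #W).choose (k - #W) :=
          card_filter_powersetCard_subset W univ k (subset_univ W) hWk
      _ ≤ (Fintype.card V - #W) ^ (k - #W) := Nat.choose_le_pow _ _
      _ ≤ Fintype.card V ^ (k - #W) := Nat.pow_le_pow_left (Nat.sub_le _ _) _
      _ ≤ Fintype.card V ^ (k - j) :=
          Nat.pow_le_pow_right Fintype.card_pos (Nat.sub_le_sub_left (h𝒲 W hW) k)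
  · have hempty : {A ∈ powersetCard k (univ : Finset V) | W ⊆ A} = ∅ :=
      filter_eq_empty_iff.2 fun A hA hWA ↦ by
        have := card_le_card hWA
        rw [mem_powersetCard_univ.1 hA] at this
        omega
    simp [hempty]

variable {V : Type*} [DecidableEq V] [Fintype V] {s k : ℕ} {F : Finset (Finset V)}
  {A D K : Finset V}

open scoped Classical in
/-- The inclusion-minimal kernels of `F` among those containing `D`. -/
noncomputable def minimalKernels (s : ℕ) (F : Finset (Finset V)) (D : Finset V) :
    Finset (Finset V) :=
  {K | Minimal (fun K ↦ D ⊆ K ∧ IsKernel s F K) K}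

lemma mem_minimalKernels :
    K ∈ minimalKernels s F D ↔ Minimal (fun K ↦ D ⊆ K ∧ IsKernel s F K) K := by
  simp [minimalKernels]

lemma exists_mem_minimalKernels_subset (hDK : D ⊆ K) (hK : IsKernel s F K) :
    ∃ L ∈ minimalKernels s F D, L ⊆ K := by
  obtain ⟨L, hLK, hL⟩ :=
    exists_minimal_le_of_wellFoundedLT (fun K ↦ D ⊆ K ∧ IsKernel s F K) K ⟨hDK, hK⟩
  exact ⟨L, mem_minimalKernels.2 hL, hLK⟩

lemma minimalKernels_eq_singleton (hD : IsKernel s F D) : minimalKernels s F D = {D} := by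
  ext K
  rw [mem_minimalKernels, mem_singleton]
  refine ⟨fun hK ↦ hK.eq_of_ge ⟨Subset.rfl, hD⟩ hK.prop.1, ?_⟩
  rintro rfl
  exact ⟨⟨Subset.rfl, hD⟩, fun L hL _ ↦ hL.1⟩

-- A set `S` witnessing that `D` is not a kernel must meet every kernel above `D` outside `D`.
lemma minimalKernels_subset_biUnion (hD : ¬ IsKernel s F D) :
    ∃ S : Finset V, #S ≤ s ∧
      minimalKernels s F D ⊆ (S \ D).biUnion fun z ↦ minimalKernels s F (insert z D) := by
  simp only [IsKernel, not_forall, not_exists, not_and] at hD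
  obtain ⟨S, hS, hSD⟩ := hD
  refine ⟨S, hS, fun K hKmin ↦ ?_⟩
  rw [mem_minimalKernels] at hKmin
  obtain ⟨hDK, hK⟩ := hKmin.prop
  obtain ⟨A, hA, hKA, hAS⟩ := hK S hS
  obtain ⟨z, hzAS, hzD⟩ := not_subset.1 (hSD A hA (hDK.trans hKA))
  refine mem_biUnion.2 ⟨z, mem_sdiff.2 ⟨(mem_inter.1 hzAS).2, hzD⟩, mem_minimalKernels.2 ?_⟩
  exact ⟨⟨insert_subset (hAS hzAS) hDK, hK⟩,
    fun L hL hLK ↦ hKmin.2 ⟨(subset_insert z D).trans hL.1, hL.2⟩ hLK⟩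

lemma card_minimalKernels_le (hs : 1 ≤ s) (hF : (F : Set (Finset V)).Sized k) (D : Finset V) :
    #(minimalKernels s F D) ≤ s ^ (k - #D) := by
  induction hm : k - #D generalizing D with
  | zero =>
    refine card_le_one.2 fun K hK K' hK' ↦ ?_
    have eq_of_mem : ∀ L ∈ minimalKernels s F D, L = D := fun L hL ↦ by
      obtain ⟨hDL, hLker⟩ := (mem_minimalKernels.1 hL).prop
      obtain ⟨A, hA, hLA⟩ := hLker.exists_superset_mem
      have hAk : #A = k := hF hA
      exact (eq_of_subset_of_card_le hDL ((card_le_card hLA).trans (by omega))).symm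
    rw [eq_of_mem K hK, eq_of_mem K' hK']
  | succ m ih =>
    by_cases hD : IsKernel s F D
    · rw [minimalKernels_eq_singleton hD, card_singleton]
      exact Nat.one_le_pow _ _ hs
    obtain ⟨S, hS, hsub⟩ := minimalKernels_subset_biUnion hD
    calc #(minimalKernels s F D)
        ≤ #((S \ D).biUnion fun z ↦ minimalKernels s F (insert z D)) := card_le_card hsub
      _ ≤ #(S \ D) * s ^ m := card_biUnion_le_card_mul _ _ _ fun z hz ↦
          ih _ (by rw [card_insert_of_notMem (mem_sdiff.1 hz).2]; omega)
      _ ≤ s * s ^ m := Nat.mul_le_mul_right _ ((card_le_card sdiff_subset).trans hS)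
      _ = s ^ (m + 1) := (pow_succ' s m).symm

/-- The sets `K ∪ K'` of size at least `d + 2`, for `K` and `K'` minimal kernels above a common
`d`-set. These are the obstructions to `HasRegularKernels`. -/
noncomputable def spreadUnions (s : ℕ) (F : Finset (Finset V)) (d : ℕ) : Finset (Finset V) :=
  {W ∈ (powersetCard d univ).biUnion fun D ↦
    image₂ (· ∪ ·) (minimalKernels s F D) (minimalKernels s F D) | d + 2 ≤ #W}

lemma union_mem_spreadUnions {K' : Finset V} (hK : K ∈ minimalKernels s F D)
    (hK' : K' ∈ minimalKernels s F D) (hcard : #D + 2 ≤ #(K ∪ K')) :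
    K ∪ K' ∈ spreadUnions s F #D :=
  mem_filter.2 ⟨mem_biUnion.2
    ⟨D, mem_powersetCard_univ.2 rfl, mem_image₂_of_mem hK hK'⟩, hcard⟩

lemma card_spreadUnions_le (hs : 1 ≤ s) (hF : (F : Set (Finset V)).Sized k) (d : ℕ) :
    #(spreadUnions s F d) ≤ Fintype.card V ^ d * s ^ (2 * k) := by
  have hmin (D : Finset V) : #(minimalKernels s F D) ≤ s ^ k :=
    (card_minimalKernels_le hs hF D).trans (Nat.pow_le_pow_right hs (Nat.sub_le _ _))
  calc #(spreadUnions s F d)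
      ≤ #(powersetCard d (univ : Finset V)) * s ^ (2 * k) := by
        refine (card_filter_le _ _).trans (card_biUnion_le_card_mul _ _ _ fun D _ ↦ ?_)
        calc _ ≤ #(minimalKernels s F D) * #(minimalKernels s F D) := card_image₂_le _ _ _
          _ ≤ s ^ k * s ^ k := Nat.mul_le_mul (hmin D) (hmin D)
          _ = s ^ (2 * k) := by rw [two_mul, pow_add]
    _ ≤ Fintype.card V ^ d * s ^ (2 * k) := by
        rw [card_powersetCard, card_univ]
        exact Nat.mul_le_mul_right _ (Nat.choose_le_pow _ _)

lemma isKernel_inter_of_forall_spreadUnions {K' : Finset V} (hKA : K ⊆ A) (hK'A : K' ⊆ A)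
    (hK : IsKernel s F K) (hK' : IsKernel s F K')
    (hspread : ∀ W ∈ spreadUnions s F #(K ∩ K'), ¬ W ⊆ A) : IsKernel s F (K ∩ K') := by
  by_contra hinter
  obtain ⟨L, hL, hLK⟩ := exists_mem_minimalKernels_subset (D := K ∩ K') inter_subset_left hK
  obtain ⟨L', hL', hLK'⟩ := exists_mem_minimalKernels_subset (D := K ∩ K') inter_subset_right hK'
  have card_lt : ∀ M ∈ minimalKernels s F (K ∩ K'), #(K ∩ K') < #M := fun M hM ↦ by
    obtain ⟨hsub, hMker⟩ := (mem_minimalKernels.1 hM).prop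
    exact card_lt_card (hsub.ssubset_of_ne fun h ↦ hinter (h ▸ hMker))
  have hcard : #(K ∩ K') + 2 ≤ #(L ∪ L') := by
    have := card_lt L hL
    have := card_lt L' hL'
    have := card_le_card (inter_subset_inter hLK hLK')
    have := card_union_add_card_inter L L'
    omega
  exact hspread _ (union_mem_spreadUnions hL hL' hcard)
    (union_subset (hLK.trans hKA) (hLK'.trans hK'A))

lemma hasRegularKernels_of_forall_spreadUnions (hA : A ∈ F)
    (hspread : ∀ d, ∀ W ∈ spreadUnions s F d, ¬ W ⊆ A) : HasRegularKernels s F A where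
  inter _ hKA _ hK'A hK hK' := isKernel_inter_of_forall_spreadUnions hKA hK'A hK hK' (hspread _)
  exists_ssubset D hDA hcard := by
    obtain ⟨K, hK, hKA⟩ := exists_mem_minimalKernels_subset hDA (isKernel_of_mem hA)
    refine ⟨K, hKA.ssubset_of_ne ?_, (mem_minimalKernels.1 hK).prop⟩
    rintro rfl
    exact hspread #D _ (union_mem_spreadUnions hK hK (by rwa [union_self])) (union_self K).subset

lemma exists_spreadUnions_subset_of_not_hasRegularKernels (hA : A ∈ F)
    (hreg : ¬ HasRegularKernels s F A) :
    ∃ d, d + 2 ≤ #A ∧ ∃ W ∈ spreadUnions s F d, W ⊆ A := by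
  obtain ⟨d, W, hW, hWA⟩ : ∃ d, ∃ W ∈ spreadUnions s F d, W ⊆ A := by
    by_contra! h
    exact hreg (hasRegularKernels_of_forall_spreadUnions hA h)
  exact ⟨d, (mem_filter.1 hW).2.trans (card_le_card hWA), W, hW, hWA⟩

variable [Nonempty V]

lemma card_filter_exists_spreadUnions_subset_le (hs : 1 ≤ s) (hF : (F : Set (Finset V)).Sized k)
    {d : ℕ} (hd : d + 2 ≤ k) :
    #{A ∈ F | ∃ W ∈ spreadUnions s F d, W ⊆ A} ≤ s ^ (2 * k) * Fintype.card V ^ (k - 2) :=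
  calc #{A ∈ F | ∃ W ∈ spreadUnions s F d, W ⊆ A}
      ≤ #(spreadUnions s F d) * Fintype.card V ^ (k - (d + 2)) :=
        card_le_card_mul_pow_of_forall_exists_subset (hF.mono (coe_subset.2 (filter_subset _ _)))
          (fun W hW ↦ (mem_filter.1 hW).2) fun A hA ↦ (mem_filter.1 hA).2
    _ ≤ Fintype.card V ^ d * s ^ (2 * k) * Fintype.card V ^ (k - (d + 2)) :=
        Nat.mul_le_mul_right _ (card_spreadUnions_le hs hF d)
    _ = s ^ (2 * k) * Fintype.card V ^ (d + (k - (d + 2))) := by rw [pow_add]; ring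
    _ = s ^ (2 * k) * Fintype.card V ^ (k - 2) := by
        rw [show d + (k - (d + 2)) = k - 2 by omega]

open scoped Classical in
lemma card_le_card_regularMembers_add (hs : 1 ≤ s) (hF : (F : Set (Finset V)).Sized k) :
    #F ≤ #(regularMembers s F) + k * s ^ (2 * k) * Fintype.card V ^ (k - 2) := by
  have hcover : {A ∈ F | ¬ HasRegularKernels s F A} ⊆
      (range (k - 1)).biUnion fun d ↦ {A ∈ F | ∃ W ∈ spreadUnions s F d, W ⊆ A} := by
    intro A hA
    obtain ⟨hAF, hAirr⟩ := mem_filter.1 hA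
    obtain ⟨d, hd, hW⟩ := exists_spreadUnions_subset_of_not_hasRegularKernels hAF hAirr
    rw [hF hAF] at hd
    exact mem_biUnion.2 ⟨d, mem_range.2 (by omega), mem_filter.2 ⟨hAF, hW⟩⟩
  have hirregular : #{A ∈ F | ¬ HasRegularKernels s F A} ≤
      k * s ^ (2 * k) * Fintype.card V ^ (k - 2) := by
    calc _ ≤ #(range (k - 1)) * (s ^ (2 * k) * Fintype.card V ^ (k - 2)) :=
          (card_le_card hcover).trans (card_biUnion_le_card_mul _ _ _ fun d hd ↦
            card_filter_exists_spreadUnions_subset_le hs hF (by have := mem_range.1 hd; omega))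
      _ ≤ k * (s ^ (2 * k) * Fintype.card V ^ (k - 2)) :=
          Nat.mul_le_mul_right _ (by simp)
      _ = _ := (mul_assoc _ _ _).symm
  rw [← card_filter_add_card_filter_not (s := F) (HasRegularKernels s F)]
  exact Nat.add_le_add_left hirregular _

end Counting

section LinearPaths

variable {V : Type*} [DecidableEq V]

/-- The members of the list, in this order, form a linear path. -/
def IsLinearPath : List (Finset V) → Prop
  | A :: B :: l => #(A ∩ B) = 1 ∧ (∀ C ∈ l, Disjoint A C) ∧ IsLinearPath (B :: l)
  | _ => True

lemma IsLinearPath.card_inter_getElem_succ {l : List (Finset V)} (hl : IsLinearPath l) {i : ℕ}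
    (hi : i + 1 < l.length) : #(l[i] ∩ l[i + 1]) = 1 := by
  induction l generalizing i with
  | nil => simp at hi
  | cons A l ih =>
    cases l with
    | nil => simp at hi
    | cons B l =>
      cases i with
      | zero => exact hl.1
      | succ i => exact ih hl.2.2 (Nat.lt_of_succ_lt_succ hi)

lemma IsLinearPath.disjoint_getElem {l : List (Finset V)} (hl : IsLinearPath l) {i j : ℕ}
    (hij : i + 1 < j) (hj : j < l.length) : Disjoint l[i] l[j] := by
  induction l generalizing i j with
  | nil => simp at hj
  | cons A l ih =>
    obtain ⟨j, rfl⟩ : ∃ j', j = j' + 2 := ⟨j - 2, by omega⟩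
    cases l with
    | nil => simp at hj
    | cons B l =>
      cases i with
      | zero => exact hl.2.1 _ (List.getElem_mem _)
      | succ i => exact ih hl.2.2 (i := i) (by omega) _

lemma containsLinearPath_of_forall_inter {k ℓ n : ℕ} (hk : 2 ≤ k) {F : Finset (Finset (Fin n))}
    (hF : (F : Set (Finset (Fin n))).Sized k) {P : Fin ℓ → Finset (Fin n)} (hP : ∀ i, P i ∈ F)
    (hcons : ∀ i j : Fin ℓ, (i : ℕ) + 1 = j → #(P i ∩ P j) = 1)
    (hdisj : ∀ i j : Fin ℓ, (i : ℕ) + 1 < j → P i ∩ P j = ∅) : ContainsLinearPath k ℓ F := by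
  refine ⟨P, .of_lt_imp_ne fun i j hij hPij ↦ ?_, hP, fun i ↦ hF (hP i), hcons, hdisj⟩
  have hinter : #(P i ∩ P j) = k := by rw [hPij, inter_self]; exact hF (hP j)
  rcases (Nat.succ_le_of_lt hij).eq_or_lt with hsucc | hlt
  · have := hcons i j hsucc
    omega
  · have := card_eq_zero.2 (hdisj i j hlt)
    omega

lemma IsLinearPath.containsLinearPath {k ℓ n : ℕ} (hk : 2 ≤ k) {F : Finset (Finset (Fin n))}
    (hF : (F : Set (Finset (Fin n))).Sized k) {l : List (Finset (Fin n))} (hl : IsLinearPath l)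
    (hlF : ∀ A ∈ l, A ∈ F) (hℓ : ℓ ≤ l.length) : ContainsLinearPath k ℓ F := by
  refine containsLinearPath_of_forall_inter hk hF (P := fun i ↦ l[i])
    (fun i ↦ hlF _ (List.getElem_mem _)) (fun i j hij ↦ ?_)
    fun i j hij ↦ disjoint_iff_inter_eq_empty.1 (hl.disjoint_getElem hij (j.2.trans_le hℓ))
  simp only [Fin.getElem_fin, ← hij]
  exact hl.card_inter_getElem_succ _

variable {s k : ℕ} {F B : Finset (Finset V)}

lemma iterate_regularMembers_subset (m : ℕ) : (regularMembers s)^[m] F ⊆ F := by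
  induction m with
  | zero => exact Subset.rfl
  | succ m ih =>
    rw [Function.iterate_succ_apply']
    exact regularMembers_subset.trans ih

lemma card_le_card_iterate_regularMembers_add [Fintype V] [Nonempty V] (hs : 1 ≤ s)
    (hF : (F : Set (Finset V)).Sized k) (m : ℕ) :
    #F ≤ #((regularMembers s)^[m] F) + m * (k * s ^ (2 * k) * Fintype.card V ^ (k - 2)) := by
  induction m with
  | zero => simp
  | succ m ih =>
    rw [Function.iterate_succ_apply', add_mul, one_mul]
    have := card_le_card_regularMembers_add hs
      (hF.mono (coe_subset.2 (iterate_regularMembers_subset (s := s) m)))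
    omega

-- A non-star member has a one-vertex kernel other than the vertex `x` through which the path
-- arrived; each further step costs one round of regularization.
lemma exists_isLinearPath_cons (hk : 4 ≤ k) (hB : (B : Set (Finset V)).Sized k)
    (hstar : ∀ A ∈ B, ¬ SpansStar (kernelGraph s B) A) {m : ℕ} {A S : Finset V} {x : V}
    (hA : A ∈ (regularMembers s)^[m] B) (hAS : A ∩ S ⊆ {x}) (hS : #S + k * m ≤ s) :
    ∃ l : List (Finset V), l.length = m ∧ IsLinearPath (A :: l) ∧
      ∀ C ∈ l, C ∈ B ∧ Disjoint C S := by
  induction m generalizing A S x with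
  | zero => exact ⟨[], rfl, trivial, by simp⟩
  | succ m ih =>
    have hsub : (regularMembers s)^[m] B ⊆ B := iterate_regularMembers_subset m
    rw [Function.iterate_succ_apply'] at hA
    obtain ⟨hAm, hAreg⟩ := mem_regularMembers.1 hA
    have hAk : #A = k := hB (hsub hAm)
    obtain ⟨y, hyA, hyx, hy⟩ := hAreg.exists_isKernel_singleton hAm (hAk ▸ hk)
      (fun h ↦ hstar A (hsub hAm) (h.mono (kernelGraph_mono hsub))) x
    have hSA : #(S ∪ A) + k * m ≤ s := by
      have := card_union_le S A
      rw [mul_add] at hS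
      omega
    obtain ⟨A', hA', hyA', hA'SA⟩ := hy (S ∪ A) (by omega)
    obtain ⟨l, hlen, hl, hlB⟩ := ih hA' hA'SA hSA
    have hAA' : A ∩ A' = {y} := by grind
    have hyS : y ∉ S := fun hyS ↦ hyx (mem_singleton.1 (hAS (mem_inter.2 ⟨hyA, hyS⟩)))
    have hA'S : Disjoint A' S := disjoint_left.2 fun z hzA' hzS ↦
      hyS (mem_singleton.1 (hA'SA (mem_inter.2 ⟨hzA', mem_union_left A hzS⟩)) ▸ hzS)
    refine ⟨A' :: l, by simp [hlen], ⟨by simp [hAA'], fun C hC ↦ ?_, hl⟩, ?_⟩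
    · exact (disjoint_union_right.1 (hlB C hC).2).2.symm
    · rintro C (_ | ⟨_, hC⟩)
      · exact ⟨hsub hA', hA'S⟩
      · exact ⟨(hlB C hC).1, (disjoint_union_right.1 (hlB C hC).2).1⟩

open scoped Classical in
lemma card_filter_not_spansStar_le {n ℓ : ℕ} [NeZero n] (hs : 1 ≤ s) (hk : 4 ≤ k)
    (hℓ : k * ℓ ≤ s) {F : Finset (Finset (Fin n))} (hF : (F : Set (Finset (Fin n))).Sized k)
    (hpath : ¬ ContainsLinearPath k ℓ F) :
    #{A ∈ F | ¬ SpansStar (kernelGraph s F) A} ≤ ℓ * (k * s ^ (2 * k) * n ^ (k - 2)) := by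
  set B := {A ∈ F | ¬ SpansStar (kernelGraph s F) A}
  have hBF : B ⊆ F := filter_subset _ _
  have hB : (B : Set (Finset (Fin n))).Sized k := hF.mono (coe_subset.2 hBF)
  have hstar : ∀ A ∈ B, ¬ SpansStar (kernelGraph s B) A := fun A hA h ↦
    (mem_filter.1 hA).2 (h.mono (kernelGraph_mono hBF))
  suffices hempty : (regularMembers s)^[ℓ] B = ∅ by
    simpa [hempty] using card_le_card_iterate_regularMembers_add hs hB ℓ
  refine eq_empty_of_forall_notMem fun A hA ↦ hpath ?_
  obtain ⟨l, hlen, hl, hlB⟩ := exists_isLinearPath_cons (S := ∅) (x := 0) hk hB hstar hA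
    (by simp) (by simpa using hℓ)
  refine hl.containsLinearPath (by omega) hF ?_ (by simp [hlen])
  rintro C (_ | ⟨_, hC⟩)
  · exact hBF (iterate_regularMembers_subset ℓ hA)
  · exact hBF (hlB C hC).1

end LinearPaths

section Blowups

open scoped SimpleGraph

variable {V ι α : Type*} {s k n : ℕ}

lemma exists_forall_mem_inter_subset_of_isKernel [DecidableEq V] {F : Finset (Finset V)}
    (hF : (F : Set (Finset V)).Sized k) {T : Finset ι} {D : ι → Finset V} {S : Finset V}
    (hD : ∀ i ∈ T, IsKernel s F (D i)) (hDS : ∀ i ∈ T, D i ⊆ S) (hs : #S + k * #T ≤ s) :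
    ∃ E : ι → Finset V, (∀ i ∈ T, E i ∈ F ∧ D i ⊆ E i ∧ E i ∩ S ⊆ D i) ∧
      (T : Set ι).Pairwise fun i j ↦ E i ∩ E j ⊆ D i := by
  classical
  induction T using Finset.induction_on generalizing S with
  | empty => exact ⟨fun _ ↦ ∅, by simp⟩
  | insert a T ha ih =>
    rw [card_insert_of_notMem ha, mul_add, mul_one] at hs
    obtain ⟨A, hAF, hDA, hAS⟩ := hD a (mem_insert_self a T) S (by omega)
    have hSA : #(S ∪ A) + k * #T ≤ s := by
      have := card_union_le S A
      have hAk : #A = k := hF hAF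
      omega
    have hDST : ∀ i ∈ T, D i ⊆ S := fun i hi ↦ hDS i (mem_insert_of_mem hi)
    obtain ⟨E, hE, hpair⟩ := ih (fun i hi ↦ hD i (mem_insert_of_mem hi))
      (fun i hi ↦ (hDST i hi).trans subset_union_left) hSA
    have hupdate : ∀ i ∈ T, Function.update E a A i = E i := fun i hi ↦
      Function.update_of_ne (ne_of_mem_of_not_mem hi ha) _ _
    have hEA : ∀ i ∈ T, E i ∩ A ⊆ D i := fun i hi ↦
      (inter_subset_inter_left subset_union_right).trans (hE i hi).2.2
    refine ⟨Function.update E a A, forall_mem_insert _ _ _ |>.2 ⟨?_, fun i hi ↦ ?_⟩, ?_⟩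
    · simpa using ⟨hAF, hDA, hAS⟩
    · rw [hupdate i hi]
      exact ⟨(hE i hi).1, (hE i hi).2.1,
        (inter_subset_inter_left subset_union_left).trans (hE i hi).2.2⟩
    · rw [coe_insert, Set.pairwise_insert_of_notMem (mod_cast ha)]
      refine ⟨fun i hi j hj hij ↦ ?_, fun i hi ↦ ?_⟩
      · simpa only [hupdate i hi, hupdate j hj] using hpair hi hj hij
      · rw [hupdate i hi, Function.update_self]
        refine ⟨fun z hz ↦ hAS ?_, hEA i hi⟩
        have hzD : z ∈ D i := hEA i hi (inter_comm A (E i) ▸ hz)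
        exact mem_inter.2 ⟨(mem_inter.1 hz).1, hDST i hi hzD⟩

lemma containsBlowup_of_isContained_kernelGraph [Fintype α] {H : SimpleGraph α}
    [Fintype H.edgeSet] {F : Finset (Finset (Fin n))} (hF : (F : Set (Finset (Fin n))).Sized k)
    (hs : Fintype.card α + k * #H.edgeFinset ≤ s) (hH : H ⊑ kernelGraph s F) :
    ContainsBlowup k H F := by
  obtain ⟨φ⟩ := hH
  set D : Sym2 α → Finset (Fin n) := fun e ↦ (e.map φ).toFinset with hDdef
  have mem_D {v : Fin n} {e : Sym2 α} : v ∈ D e ↔ ∃ a ∈ e, φ a = v := by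
    simp [hDdef, Sym2.mem_toFinset, Sym2.mem_map]
  have hD : ∀ e ∈ H.edgeFinset, IsKernel s F (D e) := fun e ↦ by
    induction e with | _ a b =>
    intro hab
    have hadj : (kernelGraph s F).Adj (φ a) (φ b) :=
      φ.toHom.map_adj (SimpleGraph.mem_edgeFinset.1 hab)
    simpa [hDdef, Sym2.toFinset_mk_eq] using hadj.2
  have hDS : ∀ e ∈ H.edgeFinset, D e ⊆ univ.image φ := fun e _ v hv ↦ by
    obtain ⟨a, -, rfl⟩ := mem_D.1 hv
    exact mem_image_of_mem φ (mem_univ a)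
  have hcard : #(univ.image φ) + k * #H.edgeFinset ≤ s :=
    (Nat.add_le_add_right card_image_le _).trans hs
  obtain ⟨E, hE, hpair⟩ := exists_forall_mem_inter_subset_of_isKernel hF hD hDS hcard
  simp only [SimpleGraph.mem_edgeFinset] at hE
  refine ⟨φ, φ.injective, E, fun e he ↦ ⟨(hE e he).1, hF (hE e he).1, fun a ↦ ⟨fun ha ↦ ?_,
    fun ha ↦ ?_⟩⟩, fun e he e' he' hee' v hv hv' ↦ ?_⟩
  · exact (hE e he).2.1 (mem_D.2 ⟨a, ha, rfl⟩)
  · obtain ⟨b, hb, hba⟩ := mem_D.1 <|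
      (hE e he).2.2 (mem_inter.2 ⟨ha, mem_image_of_mem φ (mem_univ a)⟩)
    exact φ.injective hba ▸ hb
  · have he_mem := SimpleGraph.mem_edgeFinset.2 he
    have he'_mem := SimpleGraph.mem_edgeFinset.2 he'
    obtain ⟨a, ha, rfl⟩ := mem_D.1 (hpair he_mem he'_mem hee' (mem_inter.2 ⟨hv, hv'⟩))
    obtain ⟨b, hb, hba⟩ := mem_D.1 (hpair he'_mem he_mem hee'.symm (mem_inter.2 ⟨hv', hv⟩))
    exact ⟨a, ha, φ.injective hba ▸ hb, rfl⟩

lemma containsLinearPath_of_containsBlowup_pathGraph {ℓ : ℕ} (hk : 2 ≤ k)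
    {F : Finset (Finset (Fin n))} (hF : (F : Set (Finset (Fin n))).Sized k)
    (hblow : ContainsBlowup k (SimpleGraph.pathGraph (ℓ + 1)) F) : ContainsLinearPath k ℓ F := by
  obtain ⟨φ, -, E, hE, hinter⟩ := hblow
  have hedge (i : Fin ℓ) : s(i.castSucc, i.succ) ∈ (SimpleGraph.pathGraph (ℓ + 1)).edgeSet := by
    simp [SimpleGraph.pathGraph_adj]
  have hne {i j : Fin ℓ} (hij : (i : ℕ) < j) : s(i.castSucc, i.succ) ≠ s(j.castSucc, j.succ) := by
    simp only [ne_eq, Sym2.eq_iff, Fin.ext_iff, Fin.val_castSucc, Fin.val_succ]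
    omega
  have common {i j : Fin ℓ} (hij : (i : ℕ) < j) {v : Fin n}
      (hv : v ∈ E s(i.castSucc, i.succ) ∩ E s(j.castSucc, j.succ)) :
      (i : ℕ) + 1 = j ∧ v = φ i.succ := by
    obtain ⟨a, hai, haj, rfl⟩ := hinter _ (hedge i) _ (hedge j) (hne hij) v
      (mem_inter.1 hv).1 (mem_inter.1 hv).2
    simp only [Sym2.mem_iff, Fin.ext_iff, Fin.val_castSucc, Fin.val_succ] at hai haj
    exact ⟨by omega, congrArg φ (Fin.ext (by simp only [Fin.val_succ]; omega))⟩
  refine containsLinearPath_of_forall_inter hk hF (P := fun i ↦ E s(i.castSucc, i.succ))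
    (fun i ↦ (hE _ (hedge i)).1) (fun i j hij ↦ ?_) fun i j hij ↦ ?_
  · refine card_eq_one.2 ⟨φ i.succ, eq_singleton_iff_unique_mem.2 ⟨mem_inter.2 ⟨?_, ?_⟩,
      fun v hv ↦ (common (by omega) hv).2⟩⟩
    · exact ((hE _ (hedge i)).2.2 _).1 (Sym2.mem_mk_right _ _)
    · have hsucc : i.succ = j.castSucc := Fin.ext (by simpa using hij)
      exact ((hE _ (hedge j)).2.2 _).1 (hsucc ▸ Sym2.mem_mk_left _ _)
  · exact eq_empty_of_forall_notMem fun v hv ↦ by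
      have := (common (by omega) hv).1
      omega

end Blowups

section Orientations

open SimpleGraph

variable {V : Type*} {G : SimpleGraph V} {d q r ℓ : ℕ}

lemma exists_isPath_of_forall_le_card_filter_adj [DecidableRel G.Adj] {S : Finset V}
    (hS : S.Nonempty) (hdeg : ∀ v ∈ S, ℓ ≤ #{w ∈ S | G.Adj v w}) :
    ∃ (u v : V) (p : G.Walk u v), p.IsPath ∧ p.length = ℓ ∧ ∀ w ∈ p.support, w ∈ S := by
  classical
  induction ℓ with
  | zero =>
    obtain ⟨v, hv⟩ := hS
    exact ⟨v, v, .nil, .nil, rfl, by simpa using hv⟩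
  | succ m ih =>
    obtain ⟨u, v, p, hp, hlen, hpS⟩ := ih fun v hv ↦ Nat.le_of_succ_le (hdeg v hv)
    have hcard : #(p.support.toFinset.erase u) < #{w ∈ S | G.Adj u w} := by
      have hsupport := p.support.toFinset_card_le
      rw [p.length_support, hlen] at hsupport
      have := hdeg u (hpS u p.start_mem_support)
      rw [card_erase_of_mem (by simp)]
      omega
    obtain ⟨w, hw, hwp⟩ := exists_mem_notMem_of_card_lt_card hcard
    obtain ⟨hwS, huw⟩ := mem_filter.1 hw
    have hwp' : w ∉ p.support := fun h ↦
      hwp (mem_erase.2 ⟨huw.ne', List.mem_toFinset.2 h⟩)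
    exact ⟨w, v, .cons huw.symm p, hp.cons hwp', by simp [hlen], by simpa [hwS] using hpS⟩

lemma exists_card_filter_adj_lt_of_free_pathGraph [DecidableRel G.Adj]
    (hG : (pathGraph (ℓ + 1)).Free G) {S : Finset V} (hS : S.Nonempty) :
    ∃ v ∈ S, #{w ∈ S | G.Adj v w} < ℓ := by
  by_contra! hdeg
  obtain ⟨u, v, p, hp, rfl, -⟩ := exists_isPath_of_forall_le_card_filter_adj hS hdeg
  exact hG hp.isContained_pathGraph

/-- `out` lists the out-neighbours of each vertex in an orientation of `G`. Edges oriented in both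
directions are allowed. -/
def Orients (out : V → Finset V) (G : SimpleGraph V) : Prop :=
  ∀ u v, G.Adj u v ↔ v ∈ out u ∨ u ∈ out v

lemma exists_orients_of_forall_exists_card_filter_adj_le [Finite V] [DecidableRel G.Adj]
    (hG : ∀ S : Finset V, S.Nonempty → ∃ v ∈ S, #{w ∈ S | G.Adj v w} ≤ d) :
    ∃ out : V → Finset V, Orients out G ∧ ∀ v, #(out v) ≤ d := by
  classical
  cases nonempty_fintype V
  suffices h : ∀ S : Finset V, ∃ out : V → Finset V, (∀ v, #(out v) ≤ d) ∧
      (∀ u, ∀ v ∈ out u, G.Adj u v) ∧ ∀ u ∈ S, ∀ v ∈ S, G.Adj u v → v ∈ out u ∨ u ∈ out v by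
    obtain ⟨out, hcard, hadj, hcover⟩ := h univ
    exact ⟨out, fun u v ↦ ⟨hcover u (mem_univ u) v (mem_univ v),
      fun h ↦ h.elim (hadj u v) fun h ↦ (hadj v u h).symm⟩, hcard⟩
  intro S
  induction S using Finset.strongInduction with | H S ih =>
  rcases S.eq_empty_or_nonempty with rfl | hS
  · exact ⟨fun _ ↦ ∅, by simp⟩
  obtain ⟨x, hx, hxdeg⟩ := hG S hS
  obtain ⟨out, hcard, hadj, hcover⟩ := ih (S.erase x) (erase_ssubset hx)
  refine ⟨Function.update out x {w ∈ S | G.Adj x w}, fun v ↦ ?_, fun u v ↦ ?_,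
    fun u hu v hv huv ↦ ?_⟩
  · rcases eq_or_ne v x with rfl | hvx
    · simpa using hxdeg
    · simpa [hvx] using hcard v
  · rcases eq_or_ne u x with rfl | hux
    · simp
    · simpa [hux] using hadj u v
  · rcases eq_or_ne u x with rfl | hux
    · simp [hv, huv]
    rcases eq_or_ne v x with rfl | hvx
    · simp [hu, huv.symm]
    simpa [hux, hvx] using hcover u (mem_erase.2 ⟨hux, hu⟩) v (mem_erase.2 ⟨hvx, hv⟩) huv

lemma exists_orients_of_free_pathGraph [Finite V] (hG : (pathGraph (ℓ + 1)).Free G) :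
    ∃ out : V → Finset V, Orients out G ∧ ∀ v, #(out v) ≤ ℓ := by
  classical
  exact exists_orients_of_forall_exists_card_filter_adj_le fun _ hS ↦
    (exists_card_filter_adj_lt_of_free_pathGraph hG hS).imp fun _ h ↦ ⟨h.1, h.2.le⟩

lemma card_lt_of_free_completeBipartiteGraph
    (hG : (completeBipartiteGraph (Fin r) (Fin q)).Free G) {T R : Finset V} (hT : #T = r)
    (hTR : ∀ c ∈ T, ∀ y ∈ R, G.Adj c y) : #R < q := by
  by_contra! hq
  obtain ⟨R', hR', hRq⟩ := exists_subset_card_eq hq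
  exact hG (completeBipartiteGraph_isContained_iff.2 ⟨T, R', by simpa using hT, by simpa using hRq,
    fun c hc y hy ↦ hTR c hc y (hR' hy)⟩)

end Orientations

section CountingStars

variable {V : Type*} [Fintype V] [DecidableEq V] {G : SimpleGraph V} {out : V → Finset V}
  {A B : Finset V} {𝒜 : Finset (Finset V)} {d k q t : ℕ}

/-- The common out-neighbours of the vertices of `B`. -/
def commonOut (out : V → Finset V) (B : Finset V) : Finset V := {c | ∀ y ∈ B, c ∈ out y}

lemma mem_commonOut {c : V} : c ∈ commonOut out B ↔ ∀ y ∈ B, c ∈ out y := by simp [commonOut]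

/-- The three-element sets `{c, y, z}` with `c → y`, and either `c → z` or `z → c`. A set spanning
a star contains one of these unless all edges of the star point to its centre. -/
def directedTriples (out : V → Finset V) : Finset (Finset V) :=
  {W ∈ univ.biUnion fun x ↦
    (image₂ (fun y z ↦ {x, y, z}) (out x) (out x)) ∪
      (out x).biUnion fun c ↦ (out c).image fun y ↦ {c, y, x} | #W = 3}

lemma card_directedTriples_le (hout : ∀ v, #(out v) ≤ d) :
    #(directedTriples out) ≤ Fintype.card V * (2 * d ^ 2) := by
  refine (card_filter_le _ _).trans (card_biUnion_le_card_mul _ _ _ fun x _ ↦ ?_)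
  have hfork : #(image₂ (fun y z ↦ ({x, y, z} : Finset V)) (out x) (out x)) ≤ d * d :=
    (card_image₂_le _ _ _).trans (Nat.mul_le_mul (hout x) (hout x))
  have hpath : #((out x).biUnion fun c ↦ (out c).image fun y ↦ ({c, y, x} : Finset V)) ≤ d * d :=
    (card_biUnion_le_card_mul _ _ _ fun c _ ↦ card_image_le.trans (hout c)).trans
      (Nat.mul_le_mul_right d (hout x))
  have := card_union_le (image₂ (fun y z ↦ ({x, y, z} : Finset V)) (out x) (out x))
    ((out x).biUnion fun c ↦ (out c).image fun y ↦ ({c, y, x} : Finset V))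
  rw [sq]
  omega

lemma SpansStar.exists_mem_commonOut_or_directedTriples_subset (hA : SpansStar G A)
    (hcard : 3 ≤ #A) (hor : Orients out G) :
    (∃ c ∈ A, c ∈ commonOut out (A.erase c)) ∨ ∃ W ∈ directedTriples out, W ⊆ A := by
  obtain ⟨c, hc, hstar⟩ := hA
  by_cases hin : c ∈ commonOut out (A.erase c)
  · exact .inl ⟨c, hc, hin⟩
  obtain ⟨y, hy, hcy⟩ : ∃ y ∈ A.erase c, c ∉ out y := by
    simpa [mem_commonOut, and_assoc] using hin
  obtain ⟨hyc, hyA⟩ := mem_erase.1 hy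
  obtain ⟨z, hzA, hz⟩ : ∃ z ∈ A, z ∉ ({c, y} : Finset V) :=
    exists_mem_notMem_of_card_lt_card (card_le_two.trans_lt hcard)
  have hzc : z ≠ c := by grind
  have hzy : z ≠ y := by grind
  have hyout : y ∈ out c := ((hor c y).1 (hstar y hyA hyc)).resolve_right hcy
  refine .inr ⟨{c, y, z}, mem_filter.2 ⟨mem_biUnion.2 ?_, ?_⟩, by grind⟩
  · rcases (hor c z).1 (hstar z hzA hzc) with hcz | hzc
    · exact ⟨c, mem_univ c, mem_union_left _ (mem_image₂_of_mem hyout hcz)⟩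
    · exact ⟨z, mem_univ z, mem_union_right _ (mem_biUnion.2 ⟨c, hzc, mem_image_of_mem _ hyout⟩)⟩
  · exact card_eq_three.2 ⟨c, y, z, hyc.symm, hzc.symm, hzy.symm, rfl⟩

lemma card_commonOut_le (hout : ∀ v, #(out v) ≤ d) (hB : B.Nonempty) :
    #(commonOut out B) ≤ d :=
  let ⟨y, hy⟩ := hB
  (card_le_card fun _ hc ↦ mem_commonOut.1 hc y hy).trans (hout y)

lemma card_filter_lt_card_commonOut_le {j : ℕ} (hj : 1 ≤ j) (hor : Orients out G)
    (hout : ∀ v, #(out v) ≤ d)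
    (hG : (completeBipartiteGraph (Fin (t + 1)) (Fin q)).Free G) :
    #{B ∈ powersetCard j (univ : Finset V) | t < #(commonOut out B)} ≤
      Fintype.card V * (2 ^ d * 2 ^ q) := by
  classical
  have hcover : {B ∈ powersetCard j (univ : Finset V) | t < #(commonOut out B)} ⊆
      univ.biUnion fun x ↦ (powersetCard (t + 1) (out x)).biUnion fun T ↦
        powerset {y | ∀ c ∈ T, G.Adj c y} := by
    intro B hB
    obtain ⟨hBj, hBt⟩ := mem_filter.1 hB
    obtain ⟨x, hx⟩ : B.Nonempty := card_pos.1 (by rw [mem_powersetCard_univ.1 hBj]; omega)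
    obtain ⟨T, hTB, hT⟩ := exists_subset_card_eq (Nat.succ_le_of_lt hBt)
    have hTout : ∀ c ∈ T, ∀ y ∈ B, c ∈ out y := fun c hc ↦ mem_commonOut.1 (hTB hc)
    refine mem_biUnion.2 ⟨x, mem_univ x, mem_biUnion.2 ⟨T, ?_, mem_powerset.2 fun y hy ↦ ?_⟩⟩
    · exact mem_powersetCard.2 ⟨fun c hc ↦ hTout c hc x hx, hT⟩
    · simpa using fun c hc ↦ (hor c y).2 (.inr (hTout c hc y hy))
  refine (card_le_card hcover).trans (card_biUnion_le_card_mul _ _ _ fun x _ ↦ ?_)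
  have hsubsets : #(powersetCard (t + 1) (out x)) ≤ 2 ^ d := by
    rw [card_powersetCard]
    exact (Nat.choose_le_two_pow _ _).trans (Nat.pow_le_pow_right two_pos (hout x))
  refine (card_biUnion_le_card_mul _ _ (2 ^ q) fun T hT ↦ ?_).trans
    (Nat.mul_le_mul_right _ hsubsets)
  rw [card_powerset]
  refine Nat.pow_le_pow_right two_pos
    (card_lt_of_free_completeBipartiteGraph hG (mem_powersetCard.1 hT).2 fun c hc y hy ↦ ?_).le
  exact (mem_filter_univ y).1 hy c hc

lemma sum_card_commonOut_le {j : ℕ} (hj : 1 ≤ j) (hor : Orients out G)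
    (hout : ∀ v, #(out v) ≤ d)
    (hG : (completeBipartiteGraph (Fin (t + 1)) (Fin q)).Free G) :
    ∑ B ∈ powersetCard j univ, #(commonOut out B) ≤
      t * (Fintype.card V).choose j + 2 ^ d * 2 ^ q * d * Fintype.card V := by
  have hle : ∀ B ∈ powersetCard j univ,
      #(commonOut out B) ≤ t + if t < #(commonOut out B) then d else 0 := fun B hB ↦ by
    split_ifs with hBt
    · have hBne : B.Nonempty := card_pos.1 (by rw [mem_powersetCard_univ.1 hB]; omega)
      exact (card_commonOut_le hout hBne).trans (Nat.le_add_left d t)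
    · simpa using hBt
  calc ∑ B ∈ powersetCard j univ, #(commonOut out B)
      ≤ ∑ B ∈ powersetCard j univ, (t + if t < #(commonOut out B) then d else 0) :=
        sum_le_sum hle
    _ = t * (Fintype.card V).choose j +
          #{B ∈ powersetCard j univ | t < #(commonOut out B)} * d := by
        rw [sum_add_distrib, sum_const, ← sum_filter, sum_const, card_powersetCard, card_univ,
          smul_eq_mul, smul_eq_mul, mul_comm]
    _ ≤ t * (Fintype.card V).choose j + Fintype.card V * (2 ^ d * 2 ^ q) * d := by
        gcongr
        exact card_filter_lt_card_commonOut_le hj hor hout hG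
    _ = _ := by ring

lemma card_filter_exists_mem_commonOut_erase_le (h𝒜 : (𝒜 : Set (Finset V)).Sized k) :
    #{A ∈ 𝒜 | ∃ c ∈ A, c ∈ commonOut out (A.erase c)} ≤
      ∑ B ∈ powersetCard (k - 1) univ, #(commonOut out B) := by
  have hcover : {A ∈ 𝒜 | ∃ c ∈ A, c ∈ commonOut out (A.erase c)} ⊆
      (powersetCard (k - 1) univ).biUnion fun B ↦ (commonOut out B).image (insert · B) := by
    intro A hA
    obtain ⟨hA𝒜, c, hcA, hc⟩ := mem_filter.1 hA
    refine mem_biUnion.2 ⟨A.erase c, ?_, mem_image.2 ⟨c, hc, insert_erase hcA⟩⟩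
    rw [mem_powersetCard_univ, card_erase_of_mem hcA, h𝒜 hA𝒜]
  exact (card_le_card hcover).trans
    (card_biUnion_le.trans (sum_le_sum fun B _ ↦ card_image_le))

end CountingStars

section Conclusion

lemma card_le_of_forall_spansStar {V : Type*} [Fintype V] [Nonempty V] {G : SimpleGraph V}
    {out : V → Finset V} {𝒜 : Finset (Finset V)} {d k q t : ℕ} (hk : 3 ≤ k)
    (h𝒜 : (𝒜 : Set (Finset V)).Sized k) (hstar : ∀ A ∈ 𝒜, SpansStar G A) (hor : Orients out G)
    (hout : ∀ v, #(out v) ≤ d)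
    (hG : (completeBipartiteGraph (Fin (t + 1)) (Fin q)).Free G) :
    #𝒜 ≤ t * (Fintype.card V).choose (k - 1) +
      (2 * d ^ 2 + 2 ^ d * 2 ^ q * d) * Fintype.card V ^ (k - 2) := by
  classical
  have hpow : Fintype.card V ^ (k - 2) = Fintype.card V * Fintype.card V ^ (k - 3) := by
    rw [← pow_succ', show k - 3 + 1 = k - 2 by omega]
  have hin : #{A ∈ 𝒜 | ∃ c ∈ A, c ∈ commonOut out (A.erase c)} ≤
      t * (Fintype.card V).choose (k - 1) + 2 ^ d * 2 ^ q * d * Fintype.card V ^ (k - 2) := by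
    refine (card_filter_exists_mem_commonOut_erase_le h𝒜).trans
      ((sum_card_commonOut_le (by omega) hor hout hG).trans ?_)
    gcongr
    exact Nat.le_self_pow (by omega) _
  have htriple : #{A ∈ 𝒜 | ¬ ∃ c ∈ A, c ∈ commonOut out (A.erase c)} ≤
      2 * d ^ 2 * Fintype.card V ^ (k - 2) := by
    calc #{A ∈ 𝒜 | ¬ ∃ c ∈ A, c ∈ commonOut out (A.erase c)}
        ≤ #(directedTriples out) * Fintype.card V ^ (k - 3) := by
          refine card_le_card_mul_pow_of_forall_exists_subset
            (h𝒜.mono (coe_subset.2 (filter_subset _ _)))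
            (fun W hW ↦ (mem_filter.1 hW).2.ge) fun A hA ↦ ?_
          obtain ⟨hA𝒜, hnin⟩ := mem_filter.1 hA
          exact ((hstar A hA𝒜).exists_mem_commonOut_or_directedTriples_subset
            (by rwa [h𝒜 hA𝒜]) hor).resolve_left hnin
      _ ≤ Fintype.card V * (2 * d ^ 2) * Fintype.card V ^ (k - 3) :=
          Nat.mul_le_mul_right _ (card_directedTriples_le hout)
      _ = 2 * d ^ 2 * Fintype.card V ^ (k - 2) := by rw [hpow]; ring
  rw [← card_filter_add_card_filter_not (s := 𝒜) fun A ↦ ∃ c ∈ A, c ∈ commonOut out (A.erase c),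
    add_mul]
  omega

lemma choose_pred_le_choose_pred_add_pow {n k : ℕ} (hn : 1 ≤ n) (hk : 2 ≤ k) :
    n.choose (k - 1) ≤ (n - 1).choose (k - 1) + n ^ (k - 2) := by
  obtain ⟨m, rfl⟩ := Nat.exists_eq_add_of_le' hn
  obtain ⟨j, rfl⟩ := Nat.exists_eq_add_of_le' hk
  calc (m + 1).choose (j + 1) = m.choose (j + 1) + m.choose j := by
        rw [Nat.choose_succ_succ', add_comm]
    _ ≤ m.choose (j + 1) + (m + 1) ^ j := by
        gcongr
        exact (Nat.choose_le_pow m j).trans (Nat.pow_le_pow_left m.le_succ j)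

lemma pow_sub_two_le_rpow {n k : ℕ} (hn : 1 ≤ n) (hk : 2 ≤ k) :
    (n : ℝ) ^ (k - 2) ≤ (n : ℝ) ^ ((k : ℝ) - 2 + 2 / ((k : ℝ) - 1)) := by
  have hk' : (2 : ℝ) ≤ k := mod_cast hk
  rw [← Real.rpow_natCast, Nat.cast_sub hk, Nat.cast_ofNat]
  refine Real.rpow_le_rpow_of_exponent_le (mod_cast hn) (le_add_of_nonneg_right ?_)
  exact div_nonneg two_pos.le (by linarith)

theorem turan_path_and_bipartite_blowup_general (k ℓ t q : ℕ) (hk : 4 ≤ k) :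
    ∃ C : ℕ, ∀ n : ℕ, 1 ≤ n → ∀ F : Finset (Finset (Fin n)), (∀ A ∈ F, #A = k) →
      ¬ ContainsLinearPath k ℓ F →
      ¬ ContainsBlowup k (completeBipartiteGraph (Fin (t + 1)) (Fin q)) F →
      #F ≤ t * (n - 1).choose (k - 1) + C * n ^ (k - 2) := by
  classical
  set P := SimpleGraph.pathGraph (ℓ + 1)
  set K := completeBipartiteGraph (Fin (t + 1)) (Fin q)
  obtain ⟨s, hs, hsℓ, hsP, hsK⟩ : ∃ s, 1 ≤ s ∧ k * ℓ ≤ s ∧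
      Fintype.card (Fin (ℓ + 1)) + k * #P.edgeFinset ≤ s ∧
      Fintype.card (Fin (t + 1) ⊕ Fin q) + k * #K.edgeFinset ≤ s :=
    ((Filter.eventually_ge_atTop _).and <| (Filter.eventually_ge_atTop _).and <|
      (Filter.eventually_ge_atTop _).and (Filter.eventually_ge_atTop _)).exists
  refine ⟨t + (2 * ℓ ^ 2 + 2 ^ ℓ * 2 ^ q * ℓ) + ℓ * (k * s ^ (2 * k)),
    fun n hn F hF hpath hblowup ↦ ?_⟩
  have : NeZero n := ⟨by omega⟩
  have hFk : (F : Set (Finset (Fin n))).Sized k := fun A hA ↦ hF A hA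
  have hPfree : P.Free (kernelGraph s F) := fun h ↦ hpath <|
    containsLinearPath_of_containsBlowup_pathGraph (by omega) hFk <|
      containsBlowup_of_isContained_kernelGraph hFk hsP h
  have hKfree : K.Free (kernelGraph s F) := fun h ↦ hblowup <|
    containsBlowup_of_isContained_kernelGraph hFk hsK h
  obtain ⟨out, hor, hout⟩ := exists_orients_of_free_pathGraph hPfree
  have hstar : #{A ∈ F | SpansStar (kernelGraph s F) A} ≤
      t * n.choose (k - 1) + (2 * ℓ ^ 2 + 2 ^ ℓ * 2 ^ q * ℓ) * n ^ (k - 2) := by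
    simpa using card_le_of_forall_spansStar (by omega)
      (hFk.mono (coe_subset.2 (filter_subset _ _))) (fun A hA ↦ (mem_filter.1 hA).2) hor hout hKfree
  calc #F
      = #{A ∈ F | SpansStar (kernelGraph s F) A} + #{A ∈ F | ¬ SpansStar (kernelGraph s F) A} :=
        (card_filter_add_card_filter_not _).symm
    _ ≤ t * n.choose (k - 1) + (2 * ℓ ^ 2 + 2 ^ ℓ * 2 ^ q * ℓ) * n ^ (k - 2) +
          ℓ * (k * s ^ (2 * k) * n ^ (k - 2)) :=
        add_le_add hstar (card_filter_not_spansStar_le hs hk hsℓ hFk hpath)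
    _ ≤ t * ((n - 1).choose (k - 1) + n ^ (k - 2)) +
          (2 * ℓ ^ 2 + 2 ^ ℓ * 2 ^ q * ℓ) * n ^ (k - 2) +
          ℓ * (k * s ^ (2 * k) * n ^ (k - 2)) := by
        gcongr
        exact choose_pred_le_choose_pred_add_pow hn (by omega)
    _ = _ := by ring

end Conclusion

/-- Corollary 6.3: for k ≥ 4 and positive ℓ, t, q there is a constant C such that for all
sufficiently large n, every family of k-sets on [n] containing neither a linear path of
length ℓ nor the k-blowup of K_{t+1,q} has at most t·C(n-1,k-1) + C·n^{k-2+2/(k-1)}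
members. -/
theorem turan_path_and_bipartite_blowup (k ℓ t q : ℕ) (hk : 4 ≤ k)
    (hl : 1 ≤ ℓ) (ht : 1 ≤ t) (hq : 1 ≤ q) :
    ∃ C : ℝ, 0 < C ∧ ∃ n₀ : ℕ, ∀ n : ℕ, n₀ ≤ n →
      ∀ F : Finset (Finset (Fin n)), (∀ A ∈ F, A.card = k) →
        ¬ ContainsLinearPath k ℓ F →
        ¬ ContainsBlowup k (completeBipartiteGraph (Fin (t + 1)) (Fin q)) F →
        (F.card : ℝ) ≤
          (t : ℝ) * ((n - 1).choose (k - 1)) + C * (n : ℝ) ^ ((k : ℝ) - 2 + 2 / ((k : ℝ) - 1)) := by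
  obtain ⟨C, hC⟩ := turan_path_and_bipartite_blowup_general k ℓ t q hk
  refine ⟨C + 1, by positivity, 1, fun n hn F hF hpath hblowup ↦ ?_⟩
  calc (#F : ℝ) ≤ t * (n - 1).choose (k - 1) + C * (n : ℝ) ^ (k - 2) :=
        mod_cast hC n hn F hF hpath hblowup
    _ ≤ t * (n - 1).choose (k - 1) +
          (C + 1) * (n : ℝ) ^ ((k : ℝ) - 2 + 2 / ((k : ℝ) - 1)) := by
        gcongr
        · exact le_add_of_nonneg_right zero_le_one
        · exact pow_sub_two_le_rpow hn (by omega)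
end
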